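/- arXiv:1904.01919 — 2 statements merged into one kernel-verified Lean document; each statement's English description precedes it below -/
import Mathlib

section
/- Suppose 0 < s < ∞ and 1 ≤ p < ∞, and let g be holomorphic on the unit disc D. Then the multiplication operator M_g maps Q_s into the Besov space B^p if and only if g is identically zero. -/
open MeasureTheory Metric Complex Real Filter Set

noncomputable section

/-- `f` is holomorphic on the open unit disc. -/
def HolOn (f : ℂ → ℂ) : Prop := DifferentiableOn ℂ f (Metric.ball (0:ℂ) 1)

/-- The normalized Lebesgue area measure on `ℂ` (so the unit disc has total mass 1). -/
def dA : Measure ℂ := (ENNReal.ofReal π)⁻¹ • volume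

/-- Bounded holomorphic functions on the unit disc. -/
def Hinf : Set (ℂ → ℂ) :=
  {f | HolOn f ∧ ∃ C : ℝ, ∀ z ∈ Metric.ball (0:ℂ) 1, ‖f z‖ ≤ C}

/-- The Bloch space. -/
def Bloch : Set (ℂ → ℂ) :=
  {f | HolOn f ∧ ∃ C : ℝ, ∀ z ∈ Metric.ball (0:ℂ) 1,
      (1 - ‖z‖ ^ 2) * ‖deriv f z‖ ≤ C}

/-- The little Bloch space: `(1-|z|²)|f'(z)| → 0` as `|z| → 1⁻`. -/
def littleBloch : Set (ℂ → ℂ) :=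
  {f | HolOn f ∧ ∀ ε : ℝ, 0 < ε → ∃ r : ℝ, r < 1 ∧ ∀ z ∈ Metric.ball (0:ℂ) 1,
      r < ‖z‖ → (1 - ‖z‖ ^ 2) * ‖deriv f z‖ < ε}

/-- The `α`-logarithmic Bloch space. -/
def BlochLog (α : ℝ) : Set (ℂ → ℂ) :=
  {f | HolOn f ∧ ∃ C : ℝ, ∀ z ∈ Metric.ball (0:ℂ) 1,
      (1 - ‖z‖ ^ 2) * (Real.log (2 / (1 - ‖z‖ ^ 2))) ^ α *
        ‖deriv f z‖ ≤ C}

/-- The Besov space `B¹`: holomorphic `f` with `∫_D |f''| dA < ∞`. -/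
def Besov1 : Set (ℂ → ℂ) :=
  {f | HolOn f ∧ ∫⁻ z in Metric.ball (0:ℂ) 1,
      ENNReal.ofReal (‖deriv (deriv f) z‖) ∂dA < ⊤}

/-- The Besov space `Bᵖ` (`1 < p < ∞`): `∫_D (1-|z|)^(p-2) |f'(z)|^p dA(z) < ∞`. -/
def Besov (p : ℝ) : Set (ℂ → ℂ) :=
  {f | HolOn f ∧ ∫⁻ z in Metric.ball (0:ℂ) 1,
      ENNReal.ofReal ((1 - ‖z‖) ^ (p - 2) * ‖deriv f z‖ ^ p) ∂dA < ⊤}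

open scoped Classical in
/-- The Besov space `Bᵖ` for all `1 ≤ p < ∞` (with the special definition at `p = 1`). -/
def BesovFull (p : ℝ) : Set (ℂ → ℂ) := if p = 1 then Besov1 else Besov p

/-- The Möbius transformation `φ_a(z) = (a-z)/(1 - conj a · z)`. -/
def phi (a z : ℂ) : ℂ := (a - z) / (1 - (starRingEnd ℂ) a * z)

/-- The space `Q_s`. -/
def Qs (s : ℝ) : Set (ℂ → ℂ) :=
  {f | HolOn f ∧ ⨆ a ∈ Metric.ball (0:ℂ) 1, ∫⁻ z in Metric.ball (0:ℂ) 1,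
      ENNReal.ofReal (‖deriv f z‖ ^ 2 *
        (1 - ‖phi a z‖ ^ 2) ^ s) ∂dA < ⊤}

/-- The space `Q_{s,log,α}`. -/
def QsLog (s α : ℝ) : Set (ℂ → ℂ) :=
  {f | HolOn f ∧ ⨆ a ∈ Metric.ball (0:ℂ) 1,
      (ENNReal.ofReal ((Real.log (2 / (1 - ‖a‖))) ^ (2 * α)) *
        ∫⁻ z in Metric.ball (0:ℂ) 1,
          ENNReal.ofReal (‖deriv f z‖ ^ 2 *
            (1 - ‖phi a z‖ ^ 2) ^ s) ∂dA) < ⊤}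

/-- The Volterra operator `T_g(f)(z) = ∫_0^z g'(ξ) f(ξ) dξ` (along the segment from 0 to z). -/
def Tg (g f : ℂ → ℂ) : ℂ → ℂ :=
  fun z => z * ∫ t in (0:ℝ)..1, deriv g ((t : ℂ) * z) * f ((t : ℂ) * z)

/-- The companion operator `I_g(f)(z) = ∫_0^z g(ξ) f'(ξ) dξ` (along the segment from 0 to z). -/
def Ig (g f : ℂ → ℂ) : ℂ → ℂ :=
  fun z => z * ∫ t in (0:ℝ)..1, g ((t : ℂ) * z) * deriv f ((t : ℂ) * z)

/-- The multiplication operator `M_g(f) = g · f`. -/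
def Mg (g f : ℂ → ℂ) : ℂ → ℂ := fun z => g z * f z

/-- `T` maps `X` into `Y`. -/
def MapsInto (T : (ℂ → ℂ) → (ℂ → ℂ)) (X Y : Set (ℂ → ℂ)) : Prop :=
  ∀ f ∈ X, T f ∈ Y

/-- The Hardy space `H^q`. -/
def Hardy (q : ℝ) : Set (ℂ → ℂ) :=
  {f | HolOn f ∧ ∃ C : ℝ, ∀ r : ℝ, 0 < r → r < 1 →
      (1 / (2 * π)) * ∫ t in (0:ℝ)..(2 * π),
        ‖f ((r : ℂ) * Complex.exp ((t : ℂ) * Complex.I))‖ ^ q ≤ C}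

/-- An inner function: bounded holomorphic with radial boundary values of modulus 1 a.e. -/
def IsInner (g : ℂ → ℂ) : Prop :=
  g ∈ Hinf ∧ ∀ᵐ t : ℝ ∂(volume.restrict (Set.Ioc (0:ℝ) (2 * π))),
    Filter.Tendsto (fun r : ℝ => ‖g ((r : ℂ) * Complex.exp ((t : ℂ) * Complex.I))‖)
      (nhdsWithin 1 (Set.Iio 1)) (nhds 1)

/-- `X` has the f-property (division by inner functions). -/
def FProperty (X : Set (ℂ → ℂ)) : Prop :=
  ∀ h ∈ X, ∀ g : ℂ → ℂ, IsInner g →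
    (fun z => h z / g z) ∈ Hardy 1 → (fun z => h z / g z) ∈ X

/-- The space of multipliers `M(X,Y)`. -/
def Mult (X Y : Set (ℂ → ℂ)) : Set (ℂ → ℂ) :=
  {g | HolOn g ∧ ∀ f ∈ X, (fun z => g z * f z) ∈ Y}

end


noncomputable section
namespace S14

lemma phi_bound {ζ a z : ℂ} (hζ : ‖ζ‖ = 1) (ha : ‖a‖ < 1) (hz : ‖z‖ < 1) :
    0 ≤ 1 - ‖phi a z‖ ^ 2 ∧
    1 - ‖phi a z‖ ^ 2 ≤ 4 * (‖z - ζ‖ * ‖a - ζ‖) / (‖z - ζ‖ + ‖a - ζ‖) ^ 2 := by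
  have hbp : 0 < 1 - ‖a‖ ^ 2 := by nlinarith [norm_nonneg a]
  have hyp : 0 < 1 - ‖z‖ ^ 2 := by nlinarith [norm_nonneg z]
  have h1 : ‖ζ‖ ≤ ‖z‖ + ‖z - ζ‖ := by
    have := norm_sub_le z (z - ζ); simpa using this
  have h2 : ‖ζ‖ ≤ ‖a‖ + ‖a - ζ‖ := by
    have := norm_sub_le a (a - ζ); simpa using this
  have h3 : |‖z - ζ‖ - ‖a - ζ‖| ≤ ‖a - z‖ := by
    have := abs_norm_sub_norm_le (z - ζ) (a - ζ)
    rw [norm_sub_rev a z]; simpa using this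
  have key : ‖1 - (starRingEnd ℂ) a * z‖ ^ 2 = (1 - ‖a‖ ^ 2) * (1 - ‖z‖ ^ 2) + ‖a - z‖ ^ 2 := by
    simp only [← Complex.normSq_eq_norm_sq, Complex.normSq_apply]
    simp
    ring
  have hs : (‖z - ζ‖ - ‖a - ζ‖) ^ 2 ≤ ‖a - z‖ ^ 2 := by
    rw [← sq_abs]; exact pow_le_pow_left₀ (abs_nonneg _) h3 2
  set ρ := ‖z - ζ‖
  set σ := ‖a - ζ‖
  have hb : 1 - ‖a‖ ^ 2 ≤ 2 * σ := by nlinarith [norm_nonneg a]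
  have hy : 1 - ‖z‖ ^ 2 ≤ 2 * ρ := by nlinarith [norm_nonneg z]
  set b := 1 - ‖a‖ ^ 2
  set y := 1 - ‖z‖ ^ 2
  have hby : 0 < b * y := mul_pos hbp hyp
  have hbyle : b * y ≤ 4 * (ρ * σ) := by nlinarith
  have e : 1 - ‖phi a z‖ ^ 2 = b * y / (b * y + ‖a - z‖ ^ 2) := by
    unfold phi
    rw [norm_div, div_pow, key]
    have : b * y + ‖a - z‖ ^ 2 ≠ 0 := by positivity
    field_simp
    ring
  rw [e]
  refine ⟨by positivity, ?_⟩
  have hρ : 0 < ρ := by linarith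
  have hσ : 0 < σ := by linarith
  rw [div_le_div_iff₀ (by positivity) (by positivity)]
  nlinarith [mul_le_mul_of_nonneg_left hs (by positivity : 0 ≤ 4 * (ρ * σ)),
    mul_le_mul_of_nonneg_right hbyle (sq_nonneg (ρ - σ))]

/-- radial majorant -/
def kk (s σ ρ : ℝ) : ℝ := if ρ ≤ σ then σ ^ (-s) * ρ ^ (s - 2) else σ ^ s * ρ ^ (-s - 2)

lemma kk_nonneg {s σ ρ : ℝ} (hσ : 0 < σ) (hρ : 0 ≤ ρ) : 0 ≤ kk s σ ρ := by
  unfold kk; split_ifs <;> positivity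

lemma kk_bound {s σ ρ t : ℝ} (hs : 0 < s) (hσ : 0 < σ) (hρ : 0 < ρ) (ht0 : 0 ≤ t)
    (ht : t ≤ 4 * (ρ * σ) / (ρ + σ) ^ 2) : t ^ s / ρ ^ 2 ≤ 4 ^ s * kk s σ ρ := by
  unfold kk
  split_ifs with h
  · have h1 : t ≤ 4 * (ρ * σ⁻¹) := by
      refine ht.trans ?_
      rw [← div_eq_mul_inv, div_le_iff₀ (by positivity)]
      have : 4 * (ρ / σ) * (ρ + σ) ^ 2 = 4 * ρ * (ρ + σ) ^ 2 / σ := by field_simp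
      rw [this, le_div_iff₀ hσ]
      have : 0 ≤ 4 * ρ * (ρ ^ 2 + 2 * ρ * σ) := by positivity
      nlinarith
    have h2 := Real.rpow_le_rpow ht0 h1 hs.le
    rw [Real.mul_rpow (by norm_num) (by positivity), Real.mul_rpow hρ.le (by positivity),
      Real.inv_rpow hσ.le, ← Real.rpow_neg hσ.le] at h2
    rw [div_le_iff₀ (by positivity)]
    refine h2.trans (le_of_eq ?_)
    rw [Real.rpow_sub hρ, Real.rpow_two]
    field_simp
  · have h1 : t ≤ 4 * (σ * ρ⁻¹) := by
      refine ht.trans ?_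
      rw [← div_eq_mul_inv, div_le_iff₀ (by positivity)]
      have : 4 * (σ / ρ) * (ρ + σ) ^ 2 = 4 * σ * (ρ + σ) ^ 2 / ρ := by field_simp
      rw [this, le_div_iff₀ hρ]
      have : 0 ≤ 4 * σ * (σ ^ 2 + 2 * ρ * σ) := by positivity
      nlinarith
    have h2 := Real.rpow_le_rpow ht0 h1 hs.le
    rw [Real.mul_rpow (by norm_num) (by positivity), Real.mul_rpow hσ.le (by positivity),
      Real.inv_rpow hρ.le, ← Real.rpow_neg hρ.le] at h2
    rw [div_le_iff₀ (by positivity)]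
    refine h2.trans (le_of_eq ?_)
    rw [Real.rpow_sub hρ, Real.rpow_two]
    field_simp

lemma kk_meas (s σ : ℝ) : Measurable (kk s σ) := by
  unfold kk
  refine Measurable.ite measurableSet_Iic ?_ ?_ <;> fun_prop

lemma kk_int {s σ : ℝ} (hs : 0 < s) (hσ : 0 < σ) :
    ∫⁻ ρ in Ioi (0:ℝ), ENNReal.ofReal (ρ * kk s σ ρ) ≤ ENNReal.ofReal (2 / s) := by
  have hu : Ioi (0:ℝ) = Ioc 0 σ ∪ Ioi σ := (Ioc_union_Ioi_eq_Ioi hσ.le).symm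
  rw [hu]
  refine (lintegral_union_le _ _ _).trans ?_
  have e1 : ∫⁻ ρ in Ioc (0:ℝ) σ, ENNReal.ofReal (ρ * kk s σ ρ) = ENNReal.ofReal (1 / s) := by
    have : ∫⁻ ρ in Ioc (0:ℝ) σ, ENNReal.ofReal (ρ * kk s σ ρ) =
        ∫⁻ ρ in Ioc (0:ℝ) σ, ENNReal.ofReal (σ ^ (-s) * ρ ^ (s - 1)) := by
      refine setLIntegral_congr_fun measurableSet_Ioc fun ρ hρ => ?_
      simp only [kk, if_pos hρ.2]
      congr 1
      rw [show s - 1 = (s - 2) + 1 by ring, Real.rpow_add_one hρ.1.ne']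
      ring
    rw [this, ← ofReal_integral_eq_lintegral_ofReal]
    · rw [← intervalIntegral.integral_of_le hσ.le, intervalIntegral.integral_const_mul,
        integral_rpow (Or.inl (by linarith))]
      congr 1
      rw [Real.zero_rpow (by linarith), show s - 1 + 1 = s by ring, Real.rpow_neg hσ.le]
      have : σ ^ s ≠ 0 := by positivity
      field_simp
      simp
    · rw [← IntegrableOn, ← intervalIntegrable_iff_integrableOn_Ioc_of_le hσ.le]
      exact (intervalIntegral.intervalIntegrable_rpow' (by linarith)).const_mul _
    · filter_upwards [ae_restrict_mem measurableSet_Ioc] with ρ hρ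
      have := hρ.1
      positivity
  have e2 : ∫⁻ ρ in Ioi σ, ENNReal.ofReal (ρ * kk s σ ρ) = ENNReal.ofReal (1 / s) := by
    have : ∫⁻ ρ in Ioi σ, ENNReal.ofReal (ρ * kk s σ ρ) =
        ∫⁻ ρ in Ioi σ, ENNReal.ofReal (σ ^ s * ρ ^ (-s - 1)) := by
      refine setLIntegral_congr_fun measurableSet_Ioi fun ρ hρ => ?_
      have hρ' : σ < ρ := hρ
      simp only [kk, if_neg (not_le.2 hρ')]
      congr 1
      rw [show -s - 1 = (-s - 2) + 1 by ring, Real.rpow_add_one (hσ.trans hρ').ne']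
      ring
    rw [this, ← ofReal_integral_eq_lintegral_ofReal]
    · rw [MeasureTheory.integral_const_mul, integral_Ioi_rpow_of_lt (by linarith) hσ]
      congr 1
      rw [show -s - 1 + 1 = -s by ring, Real.rpow_neg hσ.le]
      have : σ ^ s ≠ 0 := by positivity
      field_simp
    · exact (integrableOn_Ioi_rpow_of_lt (by linarith) hσ).const_mul _
    · filter_upwards [ae_restrict_mem measurableSet_Ioi] with ρ hρ
      have : 0 < ρ := hσ.trans hρ
      positivity
  rw [e1, e2, ← ENNReal.ofReal_add (by positivity) (by positivity)]
  apply le_of_eq; congr 1; ring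

lemma kk_int2 {s σ : ℝ} (hs : 0 < s) (hσ : 0 < σ) (ζ : ℂ) :
    ∫⁻ z : ℂ, ENNReal.ofReal (kk s σ ‖z - ζ‖) ≤ ENNReal.ofReal (2 * π) * ENNReal.ofReal (2 / s) := by
  rw [lintegral_sub_right_eq_self (fun z : ℂ => ENNReal.ofReal (kk s σ ‖z‖)) ζ,
    ← Complex.lintegral_comp_polarCoord_symm]
  have : ∫⁻ p in polarCoord.target, ENNReal.ofReal p.1 •
      ENNReal.ofReal (kk s σ ‖Complex.polarCoord.symm p‖) =
      ∫⁻ p in (Ioi (0:ℝ)) ×ˢ (Ioo (-π) π), ENNReal.ofReal (p.1 * kk s σ p.1) := by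
    refine setLIntegral_congr_fun (measurableSet_Ioi.prod measurableSet_Ioo) fun p hp => ?_
    have h0 : 0 < p.1 := hp.1
    simp only [Complex.norm_polarCoord_symm, abs_of_pos h0, smul_eq_mul]
    rw [ENNReal.ofReal_mul h0.le]
  rw [this, Measure.volume_eq_prod, ← Measure.prod_restrict, lintegral_prod]
  · simp only [lintegral_const, Measure.restrict_apply_univ, Real.volume_Ioo]
    rw [lintegral_mul_const, mul_comm]
    · gcongr
      · apply le_of_eq; congr 1; ring
      · exact kk_int hs hσ
    · exact ((measurable_id.mul (kk_meas s σ))).ennreal_ofReal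
  · exact ((measurable_fst.mul ((kk_meas s σ).comp measurable_fst))).ennreal_ofReal.aemeasurable

/-- test functions -/
def FF (ζ : ℂ) (c : ℝ) (z : ℂ) : ℂ := Complex.exp ((c * I) * Complex.log (1 - (starRingEnd ℂ) ζ * z))

lemma uu_re {ζ z : ℂ} (hζ : ‖ζ‖ = 1) (hz : ‖z‖ < 1) : 0 < (1 - (starRingEnd ℂ) ζ * z).re := by
  have := Complex.re_le_norm ((starRingEnd ℂ) ζ * z)
  rw [norm_mul, Complex.norm_conj, hζ, one_mul] at this
  simp only [sub_re, one_re]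
  linarith

lemma uu_norm {ζ z : ℂ} (hζ : ‖ζ‖ = 1) : ‖1 - (starRingEnd ℂ) ζ * z‖ = ‖z - ζ‖ := by
  have : (1 - (starRingEnd ℂ) ζ * z) = (starRingEnd ℂ) ζ * (ζ - z) := by
    rw [mul_sub, Complex.conj_mul', hζ]; simp
  rw [this, norm_mul, Complex.norm_conj, hζ, one_mul, norm_sub_rev]

lemma FF_hasDeriv {ζ z : ℂ} (c : ℝ) (hζ : ‖ζ‖ = 1) (hz : ‖z‖ < 1) :
    HasDerivAt (FF ζ c)
      (-(c * I) * (starRingEnd ℂ) ζ * FF ζ c z / (1 - (starRingEnd ℂ) ζ * z)) z := by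
  have h0 : HasDerivAt (fun z => 1 - (starRingEnd ℂ) ζ * z) (-(starRingEnd ℂ) ζ) z := by
    simpa using ((hasDerivAt_id z).const_mul ((starRingEnd ℂ) ζ)).const_sub 1
  have h1 := ((h0.clog (Or.inl (uu_re hζ hz))).const_mul (c * I)).cexp
  refine h1.congr_deriv ?_
  unfold FF
  ring

lemma FF_norm_le {ζ z : ℂ} {c : ℝ} (hc : |c| ≤ 1) :
    ‖FF ζ c z‖ ≤ Real.exp π ∧ Real.exp (-π) ≤ ‖FF ζ c z‖ := by
  have h := Complex.abs_arg_le_pi (1 - (starRingEnd ℂ) ζ * z)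
  have e : ‖FF ζ c z‖ = Real.exp (-(c * Complex.arg (1 - (starRingEnd ℂ) ζ * z))) := by
    unfold FF
    rw [Complex.norm_exp]
    congr 1
    simp [Complex.log_re, Complex.log_im]
  have h2 : |c * Complex.arg (1 - (starRingEnd ℂ) ζ * z)| ≤ π := by
    rw [abs_mul]; nlinarith [abs_nonneg c, abs_nonneg (Complex.arg (1 - (starRingEnd ℂ) ζ * z))]
  rw [abs_le] at h2
  rw [e]
  constructor <;> apply Real.exp_le_exp.2 <;> linarith

lemma FF_mem {s : ℝ} (hs : 0 < s) {ζ : ℂ} {c : ℝ} (hζ : ‖ζ‖ = 1) (hc : |c| ≤ 1) :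
    FF ζ c ∈ Qs s := by
  refine ⟨fun z hz => ((FF_hasDeriv c hζ (by simpa using hz)).differentiableAt).differentiableWithinAt,
    ?_⟩
  set B : ENNReal := (ENNReal.ofReal π)⁻¹ * (ENNReal.ofReal (Real.exp π ^ 2 * 4 ^ s) *
    (ENNReal.ofReal (2 * π) * ENNReal.ofReal (2 / s))) with hB
  have hBt : B < ⊤ := by
    have : ENNReal.ofReal π ≠ 0 := by simpa using Real.pi_pos
    refine ENNReal.mul_lt_top (by simpa using Real.pi_pos) ?_
    exact ENNReal.mul_lt_top ENNReal.ofReal_lt_top (ENNReal.mul_lt_top ENNReal.ofReal_lt_top ENNReal.ofReal_lt_top)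
  refine lt_of_le_of_lt (iSup₂_le fun a ha => ?_) hBt
  have ha' : ‖a‖ < 1 := by simpa using ha
  have hσ : 0 < ‖a - ζ‖ := by
    rw [norm_pos_iff, sub_ne_zero]; rintro rfl; linarith
  unfold dA
  rw [Measure.restrict_smul, lintegral_smul_measure, smul_eq_mul, hB]
  gcongr
  calc ∫⁻ z in ball (0:ℂ) 1, ENNReal.ofReal (‖deriv (FF ζ c) z‖ ^ 2 * (1 - ‖phi a z‖ ^ 2) ^ s)
      ≤ ∫⁻ z in ball (0:ℂ) 1, ENNReal.ofReal (Real.exp π ^ 2 * 4 ^ s) *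
          ENNReal.ofReal (kk s ‖a - ζ‖ ‖z - ζ‖) := by
        refine setLIntegral_mono' measurableSet_ball fun z hz => ?_
        have hz' : ‖z‖ < 1 := by simpa using hz
        have hρ : 0 < ‖z - ζ‖ := by
          rw [norm_pos_iff, sub_ne_zero]; rintro rfl; linarith
        rw [← ENNReal.ofReal_mul (by positivity)]
        apply ENNReal.ofReal_le_ofReal
        obtain ⟨p1, p2⟩ := phi_bound hζ ha' hz'
        have h1 := kk_bound hs hσ hρ p1 p2
        have h2 : ‖deriv (FF ζ c) z‖ ≤ Real.exp π / ‖z - ζ‖ := by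
          rw [(FF_hasDeriv c hζ hz').deriv, norm_div, uu_norm hζ]
          gcongr
          simp only [norm_mul, norm_neg, Complex.norm_I, Complex.norm_conj, hζ, Complex.norm_real,
            Real.norm_eq_abs, mul_one]
          calc |c| * ‖FF ζ c z‖ ≤ 1 * Real.exp π := by
                gcongr; exact (FF_norm_le hc).1
            _ = _ := one_mul _
        calc ‖deriv (FF ζ c) z‖ ^ 2 * (1 - ‖phi a z‖ ^ 2) ^ s
            ≤ (Real.exp π / ‖z - ζ‖) ^ 2 * (1 - ‖phi a z‖ ^ 2) ^ s := by
              gcongr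
          _ = Real.exp π ^ 2 * ((1 - ‖phi a z‖ ^ 2) ^ s / ‖z - ζ‖ ^ 2) := by
              field_simp
          _ ≤ Real.exp π ^ 2 * (4 ^ s * kk s ‖a - ζ‖ ‖z - ζ‖) := by gcongr
          _ = _ := by ring
    _ ≤ ∫⁻ z : ℂ, ENNReal.ofReal (Real.exp π ^ 2 * 4 ^ s) *
          ENNReal.ofReal (kk s ‖a - ζ‖ ‖z - ζ‖) := setLIntegral_le_lintegral _ _
    _ ≤ _ := by
        rw [lintegral_const_mul']
        · gcongr
          exact kk_int2 hs hσ ζ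
        · simp


lemma circ_mean {v : ℂ → ℂ} {a : ℂ} {R ρ : ℝ} (hv : DifferentiableOn ℂ v (ball a R))
    (hρ : 0 < ρ) (hρR : ρ < R) :
    ENNReal.ofReal (2 * π) * ‖v a‖ₑ ≤
      ∫⁻ θ in Ioo (-π) π, ‖v (a + Complex.polarCoord.symm (ρ, θ))‖ₑ := by
  have hd : DiffContOnCl ℂ v (ball a |ρ|) := by
    rw [abs_of_pos hρ]
    refine (hv.mono ?_).diffContOnCl
    rw [closure_ball _ hρ.ne']
    exact closedBall_subset_ball hρR
  have h1 := hd.circleAverage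
  have e : ∀ θ : ℝ, circleMap a ρ θ = a + Complex.polarCoord.symm (ρ, θ) := by
    intro θ
    rw [circleMap, Complex.polarCoord_symm_apply, Complex.exp_mul_I]
    simp
  have hper : Function.Periodic (fun θ => v (circleMap a ρ θ)) (2 * π) := by
    intro θ; simp only [periodic_circleMap a ρ θ]
  have h2 := hper.intervalIntegral_add_eq 0 (-π)
  rw [Real.circleAverage] at h1
  rw [zero_add, show -π + 2 * π = π by ring] at h2
  rw [h2] at h1
  have h3 : (2 * π : ℝ) • v a = ∫ θ in Ioc (-π) π, v (circleMap a ρ θ) := by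
    rw [← h1, intervalIntegral.integral_of_le (by linarith [Real.pi_pos]), smul_smul,
      mul_inv_cancel₀ (by positivity), one_smul]
  calc ENNReal.ofReal (2 * π) * ‖v a‖ₑ = ‖(2 * π : ℝ) • v a‖ₑ := by
        rw [enorm_smul, Real.enorm_eq_ofReal (by positivity)]
    _ ≤ ∫⁻ θ in Ioc (-π) π, ‖v (circleMap a ρ θ)‖ₑ := by
        rw [h3]; exact enorm_integral_le_lintegral_enorm _
    _ = _ := by
        rw [setLIntegral_congr Ioo_ae_eq_Ioc.symm]
        simp only [e]

lemma area_mean {v : ℂ → ℂ} {a : ℂ} {R : ℝ} (hR : 0 < R) (hv : DifferentiableOn ℂ v (ball a R)) :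
    ‖v a‖ₑ * ENNReal.ofReal (π * R ^ 2) ≤ ∫⁻ z in ball a R, ‖v z‖ₑ := by
  classical
  set V : ℂ → ℂ := (ball a R).piecewise v (fun _ => 0) with hV
  have hVm : Measurable V :=
    (hv.continuousOn).measurable_piecewise continuousOn_const measurableSet_ball
  have e1 : ∫⁻ z in ball a R, ‖v z‖ₑ = ∫⁻ z in ball a R, ‖V z‖ₑ :=
    setLIntegral_congr_fun measurableSet_ball fun z hz => by
      simp only [hV, Set.piecewise_eq_of_mem _ _ _ hz]
  have e2 : ∫⁻ z in ball a R, ‖V z‖ₑ = ∫⁻ z, ‖V z‖ₑ := by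
    rw [← lintegral_indicator measurableSet_ball]
    congr 1; ext z
    by_cases hz : z ∈ ball a R
    · simp [Set.indicator_of_mem hz]
    · rw [Set.indicator_of_notMem hz]; simp [hV, Set.piecewise_eq_of_notMem _ _ _ hz]
  rw [e1, e2, ← lintegral_add_left_eq_self (fun z => ‖V z‖ₑ) a,
    ← Complex.lintegral_comp_polarCoord_symm]
  have hpm : Measurable (fun p : ℝ × ℝ => Complex.polarCoord.symm p) := by
    have : (fun p : ℝ × ℝ => Complex.polarCoord.symm p) =
        fun p : ℝ × ℝ => (p.1 : ℂ) * (Real.cos p.2 + Real.sin p.2 * I) := by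
      ext p; rw [Complex.polarCoord_symm_apply]
    rw [this]; fun_prop
  have ht : polarCoord.target = (Ioi (0:ℝ)) ×ˢ (Ioo (-π) π) := rfl
  rw [ht, Measure.volume_eq_prod, ← Measure.prod_restrict, lintegral_prod]
  swap
  · have : Measurable (fun p : ℝ × ℝ => ENNReal.ofReal p.1 • ‖V (a + Complex.polarCoord.symm p)‖ₑ) := by
      simp only [smul_eq_mul]
      exact (measurable_fst.ennreal_ofReal).mul (hVm.comp (hpm.const_add a)).enorm
    exact this.aemeasurable
  have hrhoint : ∫⁻ ρ in Ioo (0:ℝ) R, ENNReal.ofReal ρ = ENNReal.ofReal (R ^ 2 / 2) := by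
    rw [setLIntegral_congr Ioo_ae_eq_Ioc, ← ofReal_integral_eq_lintegral_ofReal]
    · rw [← intervalIntegral.integral_of_le hR.le, integral_id]
      congr 1; ring
    · rw [← IntegrableOn, ← intervalIntegrable_iff_integrableOn_Ioc_of_le hR.le]
      exact intervalIntegral.intervalIntegrable_id
    · filter_upwards [ae_restrict_mem measurableSet_Ioc] with ρ hρ
      exact hρ.1.le
  calc ‖v a‖ₑ * ENNReal.ofReal (π * R ^ 2)
      = ENNReal.ofReal (R ^ 2 / 2) * (ENNReal.ofReal (2 * π) * ‖v a‖ₑ) := by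
        rw [← mul_assoc, ← ENNReal.ofReal_mul (by positivity), mul_comm]
        congr 2; ring
    _ = ∫⁻ ρ in Ioo (0:ℝ) R, ENNReal.ofReal ρ * (ENNReal.ofReal (2 * π) * ‖v a‖ₑ) := by
        rw [lintegral_mul_const _ (by fun_prop), hrhoint]
    _ ≤ ∫⁻ ρ in Ioo (0:ℝ) R, ∫⁻ θ in Ioo (-π) π,
          ENNReal.ofReal ρ • ‖V (a + Complex.polarCoord.symm (ρ, θ))‖ₑ := by
        refine setLIntegral_mono' measurableSet_Ioo fun ρ hρ => ?_
        simp only [smul_eq_mul]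
        rw [lintegral_const_mul' _ _ (by simp)]
        gcongr
        refine (circ_mean hv hρ.1 hρ.2).trans (le_of_eq ?_)
        congr 1; ext θ
        have hm : a + Complex.polarCoord.symm (ρ, θ) ∈ ball a R := by
          rw [mem_ball, dist_eq_norm, add_sub_cancel_left, Complex.norm_polarCoord_symm]
          simpa [abs_of_pos hρ.1] using hρ.2
        simp only [hV, Set.piecewise_eq_of_mem _ _ _ hm]
    _ ≤ _ := lintegral_mono_set Ioo_subset_Ioi_self

lemma bern {q A x : ℝ} (hq : 1 ≤ q) (hA : 0 < A) (hx : 0 ≤ x) :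
    A ^ q + q * A ^ (q - 1) * x ≤ x ^ q + q * A ^ q := by
  have h := one_add_mul_self_le_rpow_one_add (s := x / A - 1) (by
    have : 0 ≤ x / A := by positivity
    linarith) hq
  rw [show 1 + (x / A - 1) = x / A by ring, Real.div_rpow hx hA.le,
    le_div_iff₀ (by positivity)] at h
  have e : A ^ q = A ^ (q - 1) * A := by
    rw [← Real.rpow_add_one hA.ne']; congr 1; ring
  have e2 : A ^ q * (x / A) = A ^ (q - 1) * x := by rw [e]; field_simp
  nlinarith

lemma area_mean_pow {v : ℂ → ℂ} {a : ℂ} {R q : ℝ} (hq : 1 ≤ q) (hR : 0 < R)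
    (hv : DifferentiableOn ℂ v (ball a R)) :
    ENNReal.ofReal (‖v a‖ ^ q) * ENNReal.ofReal (π * R ^ 2) ≤
      ∫⁻ z in ball a R, ENNReal.ofReal (‖v z‖ ^ q) := by
  rcases (norm_nonneg (v a)).eq_or_lt with h0 | h0
  · rw [← h0, Real.zero_rpow (by linarith)]; simp
  set A := ‖v a‖ with hA
  have hm := area_mean hR hv
  have hvol : volume (ball a R) = ENNReal.ofReal (π * R ^ 2) := by
    rw [Complex.volume_ball, mul_comm, ENNReal.ofReal_mul Real.pi_pos.le, ENNReal.ofReal_pow hR.le]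
    congr 1
    rw [← NNReal.coe_real_pi, ENNReal.ofReal_coe_nnreal]
  set M := ENNReal.ofReal (π * R ^ 2) with hM
  have hMt : M ≠ ⊤ := ENNReal.ofReal_ne_top
  have h1 : ∫⁻ z in ball a R, (ENNReal.ofReal (A ^ q) + ENNReal.ofReal (q * A ^ (q - 1)) * ‖v z‖ₑ) ≤
      ∫⁻ z in ball a R, (ENNReal.ofReal (‖v z‖ ^ q) + ENNReal.ofReal (q * A ^ q)) := by
    refine lintegral_mono fun z => ?_
    rw [← ofReal_norm, ← ENNReal.ofReal_mul (by positivity),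
      ← ENNReal.ofReal_add (by positivity) (by positivity),
      ← ENNReal.ofReal_add (by positivity) (by positivity)]
    exact ENNReal.ofReal_le_ofReal (bern hq h0 (norm_nonneg _))
  rw [lintegral_add_left measurable_const, lintegral_add_right _ measurable_const,
    lintegral_const_mul' _ _ (by simp), setLIntegral_const, setLIntegral_const, hvol] at h1
  have h2 : ENNReal.ofReal (q * A ^ q) * M ≤
      ENNReal.ofReal (q * A ^ (q - 1)) * ∫⁻ z in ball a R, ‖v z‖ₑ := by
    refine le_trans ?_ (mul_le_mul_right hm _)
    have e : A ^ q = A ^ (q - 1) * A := by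
      rw [← Real.rpow_add_one h0.ne']; congr 1; ring
    have e3 : ENNReal.ofReal (q * A ^ q) = ENNReal.ofReal (q * A ^ (q - 1)) * ‖v a‖ₑ := by
      rw [← ofReal_norm, ← hA, ← ENNReal.ofReal_mul (by positivity), e, mul_assoc]
    rw [e3, mul_assoc]
  have h3 := (add_le_add_right h2 (ENNReal.ofReal (A ^ q) * M)).trans h1
  exact (ENNReal.add_le_add_iff_right (ENNReal.mul_ne_top ENNReal.ofReal_ne_top hMt)).1 h3

/-- weighted measure -/
def mm (v : ℂ → ℂ) (e q : ℝ) : Measure ℂ :=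
  (volume.restrict (ball (0:ℂ) 1)).withDensity
    (fun z => ENNReal.ofReal ((1 - ‖z‖) ^ e * ‖v z‖ ^ q))

lemma mm_local {v : ℂ → ℂ} (e q : ℝ) (hq : 1 ≤ q) (hv : DifferentiableOn ℂ v (ball (0:ℂ) 1))
    {a : ℂ} {d : ℝ} (hd : 0 < d) (had : ‖a‖ = 1 - d) :
    ENNReal.ofReal (d ^ (e + 2) * ‖v a‖ ^ q) ≤
      ENNReal.ofReal (2 ^ |e| * 4 / π) * mm v e q (ball a (d / 2)) := by
  have hsub : ball a (d / 2) ⊆ ball (0:ℂ) 1 := by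
    intro z hz
    rw [mem_ball, dist_eq_norm] at hz
    have : ‖z‖ ≤ ‖a‖ + ‖z - a‖ := by simpa using norm_add_le a (z - a)
    rw [mem_ball_zero_iff]; linarith
  have h1 := area_mean_pow hq (half_pos hd) (hv.mono hsub)
  have h2 : ∫⁻ z in ball a (d / 2), ENNReal.ofReal (‖v z‖ ^ q) ≤
      ENNReal.ofReal (2 ^ |e| * d ^ (-e)) * mm v e q (ball a (d / 2)) := by
    unfold mm
    rw [withDensity_apply _ measurableSet_ball, Measure.restrict_restrict measurableSet_ball,
      inter_eq_left.2 hsub, ← lintegral_const_mul' _ _ (by simp)]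
    refine setLIntegral_mono' measurableSet_ball fun z hz => ?_
    rw [mem_ball, dist_eq_norm] at hz
    have l1 : ‖z‖ ≤ ‖a‖ + ‖z - a‖ := by simpa using norm_add_le a (z - a)
    have l2 : ‖a‖ ≤ ‖z‖ + ‖z - a‖ := by
      have := norm_sub_le z (z - a); simpa using this
    have hw : 0 < 1 - ‖z‖ := by linarith
    rw [← ENNReal.ofReal_mul (by positivity)]
    apply ENNReal.ofReal_le_ofReal
    have key : 1 ≤ 2 ^ |e| * d ^ (-e) * (1 - ‖z‖) ^ e := by
      rcases le_total 0 e with he | he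
      · rw [abs_of_nonneg he, Real.rpow_neg hd.le, ← Real.inv_rpow hd.le,
          ← Real.mul_rpow (by positivity) (by positivity),
          ← Real.mul_rpow (by positivity) (by positivity)]
        apply Real.one_le_rpow _ he
        rw [mul_assoc, mul_comm d⁻¹, ← mul_assoc, ← div_eq_mul_inv, le_div_iff₀ hd]
        linarith
      · rw [abs_of_nonpos he]
        rw [show (1 - ‖z‖) ^ e = ((1 - ‖z‖)⁻¹) ^ (-e) by
          rw [Real.inv_rpow hw.le, Real.rpow_neg hw.le, inv_inv],
          ← Real.mul_rpow (by positivity) (by positivity),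
          ← Real.mul_rpow (by positivity) (by positivity)]
        apply Real.one_le_rpow _ (by linarith)
        rw [← div_eq_mul_inv, le_div_iff₀ hw]
        linarith
    have : 0 ≤ ‖v z‖ ^ q := by positivity
    nlinarith
  have h3 := h1.trans h2
  have e1 : ENNReal.ofReal (d ^ (e + 2) * ‖v a‖ ^ q) =
      ENNReal.ofReal (d ^ e * 4 / π) *
        (ENNReal.ofReal (‖v a‖ ^ q) * ENNReal.ofReal (π * (d / 2) ^ 2)) := by
    rw [← ENNReal.ofReal_mul (by positivity), ← ENNReal.ofReal_mul (by positivity)]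
    congr 1
    rw [Real.rpow_add hd, Real.rpow_two]
    field_simp
    ring
  rw [e1]
  refine (mul_le_mul_right h3 _).trans (le_of_eq ?_)
  rw [← mul_assoc, ← ENNReal.ofReal_mul (by positivity)]
  congr 2
  rw [Real.rpow_neg hd.le]
  have : d ^ e ≠ 0 := by positivity
  field_simp

lemma mm_fin {v : ℂ → ℂ} {e q : ℝ}
    (h : ∫⁻ z in ball (0:ℂ) 1, ENNReal.ofReal ((1 - ‖z‖) ^ e * ‖v z‖ ^ q) ∂dA < ⊤) :
    mm v e q univ < ⊤ := by
  unfold mm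
  rw [withDensity_apply _ MeasurableSet.univ, Measure.restrict_univ]
  unfold dA at h
  rw [Measure.restrict_smul, lintegral_smul_measure, smul_eq_mul] at h
  by_contra hc
  rw [not_lt, top_le_iff] at hc
  rw [hc, ENNReal.mul_top] at h
  · exact lt_irrefl _ h
  · simp


lemma FF_zero (ζ z : ℂ) : FF ζ 0 z = 1 := by simp [FF]

lemma FF_ne (ζ z : ℂ) (c : ℝ) : FF ζ c z ≠ 0 := Complex.exp_ne_zero _

lemma one_le_expPi_mul {ζ z : ℂ} {c : ℝ} (hc : |c| ≤ 1) : 1 ≤ Real.exp π * ‖FF ζ c z‖ := by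
  have h := (FF_norm_le (ζ := ζ) (z := z) hc).2
  calc (1:ℝ) = Real.exp π * Real.exp (-π) := by rw [← Real.exp_add]; simp
    _ ≤ _ := by gcongr

lemma Mg_deriv {g : ℂ → ℂ} (hg : HolOn g) {ζ z : ℂ} (c : ℝ) (hζ : ‖ζ‖ = 1) (hz : ‖z‖ < 1) :
    deriv (Mg g (FF ζ c)) z = FF ζ c z * (deriv g z -
      (c * I) * (starRingEnd ℂ) ζ * g z / (1 - (starRingEnd ℂ) ζ * z)) := by
  have h1 : HasDerivAt g (deriv g z) z :=
    (hg.differentiableAt (isOpen_ball.mem_nhds (by simpa using hz))).hasDerivAt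
  have h2 := h1.mul (FF_hasDeriv c hζ hz)
  have : deriv (Mg g (FF ζ c)) z = _ := h2.deriv
  rw [this]
  ring

lemma Mg_deriv2 {g : ℂ → ℂ} (hg : HolOn g) {ζ z : ℂ} (c : ℝ) (hζ : ‖ζ‖ = 1) (hz : ‖z‖ < 1) :
    deriv (deriv (Mg g (FF ζ c))) z = FF ζ c z * (deriv (deriv g) z -
      2 * (c * I) * (starRingEnd ℂ) ζ * deriv g z / (1 - (starRingEnd ℂ) ζ * z) +
      (c * I) * (c * I - 1) * (starRingEnd ℂ) ζ ^ 2 * g z / (1 - (starRingEnd ℂ) ζ * z) ^ 2) := by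
  have hzb : z ∈ ball (0:ℂ) 1 := by simpa using hz
  have hev : deriv (Mg g (FF ζ c)) =ᶠ[nhds z] fun z => FF ζ c z * (deriv g z -
      (c * I) * (starRingEnd ℂ) ζ * g z / (1 - (starRingEnd ℂ) ζ * z)) := by
    filter_upwards [isOpen_ball.mem_nhds hzb] with w hw
    exact Mg_deriv hg c hζ (by simpa using hw)
  rw [hev.deriv_eq]
  have hu : (1 - (starRingEnd ℂ) ζ * z) ≠ 0 := by
    intro h; have := uu_re hζ hz; rw [h] at this; simp at this
  have h1 : HasDerivAt g (deriv g z) z :=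
    (hg.differentiableAt (isOpen_ball.mem_nhds hzb)).hasDerivAt
  have h1' : HasDerivAt (deriv g) (deriv (deriv g) z) z :=
    ((DifferentiableOn.deriv hg isOpen_ball).differentiableAt (isOpen_ball.mem_nhds hzb)).hasDerivAt
  have h0 : HasDerivAt (fun z => 1 - (starRingEnd ℂ) ζ * z) (-(starRingEnd ℂ) ζ) z := by
    simpa using ((hasDerivAt_id z).const_mul ((starRingEnd ℂ) ζ)).const_sub 1
  have h2 := (FF_hasDeriv c hζ hz).mul (h1'.sub ((h1.const_mul (c * I * (starRingEnd ℂ) ζ)).div h0 hu))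
  have e : deriv (fun z => FF ζ c z * (deriv g z -
      (c * I) * (starRingEnd ℂ) ζ * g z / (1 - (starRingEnd ℂ) ζ * z))) z = _ := h2.deriv
  rw [e]
  simp only [Pi.sub_apply, Pi.div_apply]
  field_simp
  ring

lemma u_at {ζ : ℂ} {r : ℝ} (hζ : ‖ζ‖ = 1) : 1 - (starRingEnd ℂ) ζ * (r * ζ) = ((1 - r : ℝ) : ℂ) := by
  have : (starRingEnd ℂ) ζ * ζ = 1 := by rw [Complex.conj_mul', hζ]; simp
  rw [mul_left_comm, this]; simp

lemma Mg_diff {g : ℂ → ℂ} (hg : HolOn g) {ζ : ℂ} (c : ℝ) (hζ : ‖ζ‖ = 1) :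
    DifferentiableOn ℂ (Mg g (FF ζ c)) (ball (0:ℂ) 1) :=
  DifferentiableOn.mul hg fun z hz =>
    ((FF_hasDeriv c hζ (by simpa using hz)).differentiableAt).differentiableWithinAt

lemma pt1 {g : ℂ → ℂ} (hg : HolOn g) {ζ : ℂ} (hζ : ‖ζ‖ = 1) {r : ℝ} (hr0 : 0 ≤ r) (hr : r < 1) :
    ‖g (r * ζ)‖ ≤ Real.exp π * ((1 - r) * ‖deriv (Mg g (FF ζ 1)) (r * ζ)‖ +
      (1 - r) * ‖deriv (Mg g (FF ζ 0)) (r * ζ)‖) := by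
  have hz : ‖(r:ℂ) * ζ‖ < 1 := by rw [norm_mul, hζ]; simpa [abs_of_nonneg hr0] using hr
  have hd : 0 < 1 - r := by linarith
  have hdc : ((1 - r : ℝ) : ℂ) ≠ 0 := by exact_mod_cast hd.ne'
  have e1 := Mg_deriv hg 1 hζ hz
  have e0 := Mg_deriv hg 0 hζ hz
  rw [u_at hζ] at e1 e0
  rw [FF_zero] at e0
  set h1 := deriv (Mg g (FF ζ 1)) (r * ζ)
  set h0 := deriv (Mg g (FF ζ 0)) (r * ζ)
  have hF := one_le_expPi_mul (ζ := ζ) (z := r * ζ) (c := 1) (by simp)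
  have hF2 := (FF_norm_le (ζ := ζ) (z := r * ζ) (c := 1) (by simp)).1
  set F := FF ζ 1 (r * ζ) with hFd
  have hFne : F ≠ 0 := FF_ne _ _ _
  have key : I * (starRingEnd ℂ) ζ * g (r * ζ) = ((1 - r : ℝ) : ℂ) * h0 - ((1 - r : ℝ) : ℂ) * (h1 / F) := by
    rw [e1, e0]
    push_cast
    push_cast at hdc
    field_simp
    ring
  have hn : ‖g (r * ζ)‖ = ‖I * (starRingEnd ℂ) ζ * g (r * ζ)‖ := by
    simp [hζ]
  have hdn : ‖((1 - r : ℝ) : ℂ)‖ = 1 - r := by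
    rw [Complex.norm_real, Real.norm_eq_abs, abs_of_pos hd]
  rw [hn, key]
  refine (norm_sub_le _ _).trans ?_
  rw [norm_mul, norm_mul, hdn, norm_div]
  have i1 : ‖h1‖ / ‖F‖ ≤ Real.exp π * ‖h1‖ := by
    rw [div_le_iff₀ (norm_pos_iff.2 hFne)]
    nlinarith [norm_nonneg h1]
  have i2 : ‖h0‖ ≤ Real.exp π * ‖h0‖ :=
    le_mul_of_one_le_left (norm_nonneg _) (Real.one_le_exp Real.pi_pos.le)
  nlinarith

lemma pt2 {g : ℂ → ℂ} (hg : HolOn g) {ζ : ℂ} (hζ : ‖ζ‖ = 1) {r : ℝ} (hr0 : 0 ≤ r) (hr : r < 1) :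
    ‖g (r * ζ)‖ ≤ Real.exp π * ((1 - r) ^ 2 * ‖deriv (deriv (Mg g (FF ζ 1))) (r * ζ)‖ +
      (1 - r) ^ 2 * ‖deriv (deriv (Mg g (FF ζ (-1)))) (r * ζ)‖ +
      (1 - r) ^ 2 * ‖deriv (deriv (Mg g (FF ζ 0))) (r * ζ)‖) := by
  have hz : ‖(r:ℂ) * ζ‖ < 1 := by rw [norm_mul, hζ]; simpa [abs_of_nonneg hr0] using hr
  have hd : 0 < 1 - r := by linarith
  have hdc : ((1 - r : ℝ) : ℂ) ≠ 0 := by exact_mod_cast hd.ne'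
  have e1 := Mg_deriv2 hg 1 hζ hz
  have e2 := Mg_deriv2 hg (-1) hζ hz
  have e0 := Mg_deriv2 hg 0 hζ hz
  rw [u_at hζ] at e1 e2 e0
  rw [FF_zero] at e0
  set h1 := deriv (deriv (Mg g (FF ζ 1))) (r * ζ)
  set h2 := deriv (deriv (Mg g (FF ζ (-1)))) (r * ζ)
  set h0 := deriv (deriv (Mg g (FF ζ 0))) (r * ζ)
  have hF1 := one_le_expPi_mul (ζ := ζ) (z := r * ζ) (c := 1) (by simp)
  have hF2 := one_le_expPi_mul (ζ := ζ) (z := r * ζ) (c := -1) (by simp)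
  have hFne1 : FF ζ 1 (r * ζ) ≠ 0 := FF_ne _ _ _
  have hFne2 : FF ζ (-1) (r * ζ) ≠ 0 := FF_ne _ _ _
  set F1 := FF ζ 1 (r * ζ)
  set F2 := FF ζ (-1) (r * ζ)
  set δ : ℂ := ((1 - r : ℝ) : ℂ) with hδ
  have key : (starRingEnd ℂ) ζ ^ 2 * g (r * ζ) = δ ^ 2 * h0 - δ ^ 2 / 2 * (h1 / F1)
      - δ ^ 2 / 2 * (h2 / F2) := by
    rw [e1, e2, e0, mul_div_cancel_left₀ _ hFne1, mul_div_cancel_left₀ _ hFne2]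
    push_cast
    field_simp
    ring_nf
    simp only [Complex.I_sq]
    ring
  have hn : ‖g (r * ζ)‖ = ‖(starRingEnd ℂ) ζ ^ 2 * g (r * ζ)‖ := by
    simp [hζ]
  have hdn : ‖δ‖ = 1 - r := by
    rw [Complex.norm_real, Real.norm_eq_abs, abs_of_pos hd]
  rw [hn, key]
  refine (norm_sub_le _ _).trans ?_
  refine (add_le_add_left (norm_sub_le _ _) _).trans ?_
  simp only [norm_mul, norm_div, norm_pow, hdn]
  have i1 : ‖h1‖ / ‖F1‖ ≤ Real.exp π * ‖h1‖ := by
    rw [div_le_iff₀ (norm_pos_iff.2 hFne1)]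
    nlinarith [norm_nonneg h1]
  have i2 : ‖h2‖ / ‖F2‖ ≤ Real.exp π * ‖h2‖ := by
    rw [div_le_iff₀ (norm_pos_iff.2 hFne2)]
    nlinarith [norm_nonneg h2]
  have i0 : ‖h0‖ ≤ Real.exp π * ‖h0‖ :=
    le_mul_of_one_le_left (norm_nonneg _) (Real.one_le_exp Real.pi_pos.le)
  have hd2 : 0 < (1 - r) ^ 2 := by positivity
  have j0 := mul_le_mul_of_nonneg_left i0 hd2.le
  have j1 := mul_le_mul_of_nonneg_left i1 hd2.le
  have j2 := mul_le_mul_of_nonneg_left i2 hd2.le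
  have n1 : 0 ≤ (1 - r) ^ 2 * (‖h1‖ / ‖F1‖) := by positivity
  have n2 : 0 ≤ (1 - r) ^ 2 * (‖h2‖ / ‖F2‖) := by positivity
  have : ‖(2:ℂ)‖ = 2 := by simp
  rw [this]
  linarith

lemma meas_exists {p s : ℝ} (hp : 1 ≤ p) (hs : 0 < s) {g : ℂ → ℂ} (hg : HolOn g)
    (H : MapsInto (Mg g) (Qs s) (BesovFull p)) {ζ : ℂ} (hζ : ‖ζ‖ = 1) :
    ∃ m : Measure ℂ, m univ < ⊤ ∧ ∀ r : ℝ, 0 ≤ r → r < 1 →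
      ENNReal.ofReal (‖g (r * ζ)‖ ^ p) ≤ m (ball (r * ζ) ((1 - r) / 2)) := by
  have hnorm : ∀ r : ℝ, 0 ≤ r → ‖(r:ℂ) * ζ‖ = 1 - (1 - r) := by
    intro r hr; rw [norm_mul, hζ]; simp [abs_of_nonneg hr]
  by_cases hp1 : p = 1
  · subst hp1
    have hB : ∀ c : ℝ, |c| ≤ 1 → mm (deriv (deriv (Mg g (FF ζ c)))) 0 1 univ < ⊤ := by
      intro c hc
      have := H _ (FF_mem hs hζ hc)
      rw [BesovFull, if_pos rfl] at this
      apply mm_fin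
      simpa using this.2
    have hL : ∀ c : ℝ, ∀ r : ℝ, 0 ≤ r → r < 1 →
        ENNReal.ofReal ((1 - r) ^ 2 * ‖deriv (deriv (Mg g (FF ζ c))) (r * ζ)‖) ≤
        ENNReal.ofReal (2 ^ |(0:ℝ)| * 4 / π) *
          mm (deriv (deriv (Mg g (FF ζ c)))) 0 1 (ball (r * ζ) ((1 - r) / 2)) := by
      intro c r hr0 hr
      have := mm_local (v := deriv (deriv (Mg g (FF ζ c)))) 0 1 le_rfl
        (((Mg_diff hg c hζ).deriv isOpen_ball).deriv isOpen_ball) (a := r * ζ) (d := 1 - r)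
        (by linarith) (hnorm r hr0)
      rwa [zero_add, Real.rpow_two, Real.rpow_one] at this
    refine ⟨ENNReal.ofReal (Real.exp π) • (ENNReal.ofReal (2 ^ |(0:ℝ)| * 4 / π) •
      (mm (deriv (deriv (Mg g (FF ζ 1)))) 0 1 + mm (deriv (deriv (Mg g (FF ζ (-1))))) 0 1 +
        mm (deriv (deriv (Mg g (FF ζ 0)))) 0 1)), ?_, ?_⟩
    · simp only [Measure.smul_apply, Measure.add_apply, smul_eq_mul]
      refine ENNReal.mul_lt_top ENNReal.ofReal_lt_top (ENNReal.mul_lt_top ENNReal.ofReal_lt_top ?_)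
      refine ENNReal.add_lt_top.2 ⟨ENNReal.add_lt_top.2 ⟨?_, ?_⟩, ?_⟩ <;> exact hB _ (by simp)
    · intro r hr0 hr
      have hd : 0 < 1 - r := by linarith
      simp only [Measure.smul_apply, Measure.add_apply, smul_eq_mul, mul_add]
      rw [Real.rpow_one]
      refine (ENNReal.ofReal_le_ofReal (pt2 hg hζ hr0 hr)).trans ?_
      rw [ENNReal.ofReal_mul (by positivity), ENNReal.ofReal_add (by positivity) (by positivity),
        ENNReal.ofReal_add (by positivity) (by positivity), mul_add, mul_add]
      gcongr <;> exact hL _ r hr0 hr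
  · have hB : ∀ c : ℝ, |c| ≤ 1 → mm (deriv (Mg g (FF ζ c))) (p - 2) p univ < ⊤ := by
      intro c hc
      have := H _ (FF_mem hs hζ hc)
      rw [BesovFull, if_neg hp1] at this
      exact mm_fin this.2
    have hL : ∀ c : ℝ, ∀ r : ℝ, 0 ≤ r → r < 1 →
        ENNReal.ofReal (((1 - r) * ‖deriv (Mg g (FF ζ c)) (r * ζ)‖) ^ p) ≤
        ENNReal.ofReal (2 ^ |p - 2| * 4 / π) *
          mm (deriv (Mg g (FF ζ c))) (p - 2) p (ball (r * ζ) ((1 - r) / 2)) := by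
      intro c r hr0 hr
      have := mm_local (v := deriv (Mg g (FF ζ c))) (p - 2) p hp
        ((Mg_diff hg c hζ).deriv isOpen_ball) (a := r * ζ) (d := 1 - r)
        (by linarith) (hnorm r hr0)
      rwa [sub_add_cancel, ← Real.mul_rpow (by linarith) (norm_nonneg _)] at this
    refine ⟨ENNReal.ofReal ((Real.exp π * 2) ^ p) • (ENNReal.ofReal (2 ^ |p - 2| * 4 / π) •
      (mm (deriv (Mg g (FF ζ 1))) (p - 2) p + mm (deriv (Mg g (FF ζ 0))) (p - 2) p)), ?_, ?_⟩
    · simp only [Measure.smul_apply, Measure.add_apply, smul_eq_mul]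
      refine ENNReal.mul_lt_top ENNReal.ofReal_lt_top (ENNReal.mul_lt_top ENNReal.ofReal_lt_top ?_)
      refine ENNReal.add_lt_top.2 ⟨?_, ?_⟩ <;> exact hB _ (by simp)
    · intro r hr0 hr
      have hd : 0 < 1 - r := by linarith
      have hpt := pt1 hg hζ hr0 hr
      have hl1 := hL 1 r hr0 hr
      have hl0 := hL 0 r hr0 hr
      set x := (1 - r) * ‖deriv (Mg g (FF ζ 1)) (r * ζ)‖ with hx
      set y := (1 - r) * ‖deriv (Mg g (FF ζ 0)) (r * ζ)‖ with hy
      have hx0 : 0 ≤ x := by positivity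
      have hy0 : 0 ≤ y := by positivity
      have hxy : ‖g (r * ζ)‖ ^ p ≤ (Real.exp π * 2) ^ p * (x ^ p + y ^ p) := by
        have h1 : ‖g (r * ζ)‖ ≤ (Real.exp π * 2) * max x y := by
          refine hpt.trans ?_
          rw [mul_assoc]
          gcongr
          linarith [le_max_left x y, le_max_right x y]
        calc ‖g (r * ζ)‖ ^ p ≤ ((Real.exp π * 2) * max x y) ^ p := by gcongr
          _ = (Real.exp π * 2) ^ p * (max x y) ^ p :=
              Real.mul_rpow (by positivity) (by positivity)
          _ ≤ _ := by
              gcongr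
              have a1 : 0 ≤ x ^ p := by positivity
              have a2 : 0 ≤ y ^ p := by positivity
              rcases max_cases x y with h | h <;> rw [h.1] <;> linarith
      simp only [Measure.smul_apply, Measure.add_apply, smul_eq_mul, mul_add]
      refine (ENNReal.ofReal_le_ofReal hxy).trans ?_
      rw [ENNReal.ofReal_mul (by positivity), ENNReal.ofReal_add (by positivity) (by positivity),
        mul_add]
      gcongr


/-- dyadic-type radii -/
def rk (k : ℕ) : ℝ := 1 - (1 / 4) ^ k

lemma rk_nonneg (k : ℕ) : 0 ≤ rk k := by
  have : (1 / 4 : ℝ) ^ k ≤ 1 := pow_le_one₀ (by norm_num) (by norm_num)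
  unfold rk; linarith

lemma rk_lt (k : ℕ) : rk k < 1 := by
  have : 0 < (1 / 4 : ℝ) ^ k := by positivity
  unfold rk; linarith

lemma rk_lim : Tendsto rk atTop (nhds 1) := by
  have := (tendsto_pow_atTop_nhds_zero_of_lt_one (r := (1/4 : ℝ)) (by norm_num) (by norm_num)).const_sub 1
  rw [sub_zero] at this
  exact this

lemma rk_disj {ζ : ℂ} (hζ : ‖ζ‖ = 1) {j k : ℕ} (hjk : j < k) :
    Disjoint (ball ((rk j : ℂ) * ζ) ((1 - rk j) / 2)) (ball ((rk k : ℂ) * ζ) ((1 - rk k) / 2)) := by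
  apply ball_disjoint_ball
  rw [dist_eq_norm, ← sub_mul, norm_mul, hζ, mul_one, ← Complex.ofReal_sub, Complex.norm_real,
    Real.norm_eq_abs, abs_sub_comm]
  refine le_trans ?_ (le_abs_self _)
  have h1 : (1 / 4 : ℝ) ^ k ≤ (1 / 4) ^ (j + 1) :=
    pow_le_pow_of_le_one (by norm_num) (by norm_num) hjk
  rw [pow_succ] at h1
  have : 0 < (1 / 4 : ℝ) ^ j := by positivity
  unfold rk
  linarith

lemma pointwise_bdd {p : ℝ} (hp : 1 ≤ p) {g : ℂ → ℂ} {ζ : ℂ} (hζ : ‖ζ‖ = 1)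
    (h : ∃ m : Measure ℂ, m univ < ⊤ ∧ ∀ r : ℝ, 0 ≤ r → r < 1 →
      ENNReal.ofReal (‖g (r * ζ)‖ ^ p) ≤ m (ball (r * ζ) ((1 - r) / 2))) :
    ∃ N : ℕ, (∀ r : ℝ, 0 ≤ r → r < 1 → ‖g (r * ζ)‖ ≤ N) ∧
      ∀ K : ℕ, ∑ k ∈ Finset.range K, ‖g (rk k * ζ)‖ ^ p ≤ N := by
  obtain ⟨m, hm, h⟩ := h
  obtain ⟨N, hN⟩ := exists_nat_ge ((m univ).toReal + 1)
  have hM0 : 0 ≤ (m univ).toReal := ENNReal.toReal_nonneg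
  refine ⟨N, fun r hr0 hr => ?_, fun K => ?_⟩
  · have h1 : ‖g (r * ζ)‖ ^ p ≤ (m univ).toReal :=
      (ENNReal.ofReal_le_iff_le_toReal hm.ne).1 ((h r hr0 hr).trans (measure_mono (subset_univ _)))
    rcases le_total ‖g (r * ζ)‖ 1 with h2 | h2
    · linarith
    · have := Real.rpow_le_rpow_of_exponent_le h2 hp
      rw [Real.rpow_one] at this
      linarith
  · have h1 : ENNReal.ofReal (∑ k ∈ Finset.range K, ‖g (rk k * ζ)‖ ^ p) ≤ m univ := by
      rw [ENNReal.ofReal_sum_of_nonneg (fun _ _ => by positivity)]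
      refine (Finset.sum_le_sum fun k _ => h (rk k) (rk_nonneg k) (rk_lt k)).trans ?_
      refine sum_measure_le_measure_univ (fun k _ => measurableSet_ball.nullMeasurableSet) ?_
      intro i _ j _ hij
      apply Disjoint.aedisjoint
      rcases lt_or_gt_of_ne hij with hlt | hlt
      · exact rk_disj hζ hlt
      · exact (rk_disj hζ hlt).symm
    have := (ENNReal.ofReal_le_iff_le_toReal hm.ne).1 h1
    linarith

lemma baire {p : ℝ} (hp : 1 ≤ p) {g : ℂ → ℂ} (hg : HolOn g)
    (h : ∀ ζ : ℂ, ‖ζ‖ = 1 → ∃ N : ℕ, (∀ r : ℝ, 0 ≤ r → r < 1 → ‖g (r * ζ)‖ ≤ N) ∧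
      ∀ K : ℕ, ∑ k ∈ Finset.range K, ‖g (rk k * ζ)‖ ^ p ≤ N) :
    ∃ ζ₀ : ℂ, ‖ζ₀‖ = 1 ∧ ∃ η > 0, ∃ N : ℝ, ∀ ζ : ℂ, ‖ζ‖ = 1 → ‖ζ - ζ₀‖ < η →
      (∀ r : ℝ, 0 ≤ r → r < 1 → ‖g (r * ζ)‖ ≤ N) ∧
      ∀ K : ℕ, ∑ k ∈ Finset.range K, ‖g (rk k * ζ)‖ ^ p ≤ N := by
  have hcont : ∀ r : ℝ, 0 ≤ r → r < 1 → Continuous (fun ζ : sphere (0:ℂ) 1 => ‖g (r * (ζ:ℂ))‖) := by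
    intro r hr0 hr
    have := hg.continuousOn.comp_continuous (f := fun ζ : sphere (0:ℂ) 1 => (r:ℂ) * (ζ:ℂ))
      (by fun_prop) (fun ζ => by
        have := ζ.2
        rw [mem_sphere_zero_iff_norm] at this
        rw [mem_ball_zero_iff, norm_mul, this]
        simpa [abs_of_nonneg hr0] using hr)
    exact this.norm
  let E : ℕ → Set (sphere (0:ℂ) 1) := fun N =>
    {ζ | (∀ r : ℝ, 0 ≤ r → r < 1 → ‖g (r * (ζ:ℂ))‖ ≤ N) ∧
      ∀ K : ℕ, ∑ k ∈ Finset.range K, ‖g (rk k * (ζ:ℂ))‖ ^ p ≤ N}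
  have hcl : ∀ N, IsClosed (E N) := by
    intro N
    have e : E N = (⋂ r : ℝ, ⋂ _ : 0 ≤ r, ⋂ _ : r < 1,
        {ζ : sphere (0:ℂ) 1 | ‖g (r * (ζ:ℂ))‖ ≤ N}) ∩
        ⋂ K : ℕ, {ζ : sphere (0:ℂ) 1 | ∑ k ∈ Finset.range K, ‖g (rk k * (ζ:ℂ))‖ ^ p ≤ N} := by
      ext ζ
      simp [E]
    rw [e]
    apply IsClosed.inter
    · refine isClosed_iInter fun r => isClosed_iInter fun hr0 => isClosed_iInter fun hr => ?_
      exact isClosed_le (hcont r hr0 hr) continuous_const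
    · refine isClosed_iInter fun K => isClosed_le ?_ continuous_const
      refine continuous_finset_sum _ fun k _ => ?_
      exact (hcont _ (rk_nonneg k) (rk_lt k)).rpow_const (fun _ => Or.inr (by linarith))
  have hun : ⋃ N, E N = univ := by
    refine eq_univ_of_forall fun ζ => ?_
    obtain ⟨N, hN⟩ := h ζ (mem_sphere_zero_iff_norm.1 ζ.2)
    exact mem_iUnion.2 ⟨N, hN⟩
  have : Nonempty (sphere (0:ℂ) 1) := ⟨⟨1, by simp⟩⟩
  have : CompleteSpace (sphere (0:ℂ) 1) := isClosed_sphere.completeSpace_coe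
  obtain ⟨N, ζ₀, hζ₀⟩ := nonempty_interior_of_iUnion_of_closed hcl hun
  rw [mem_interior_iff_mem_nhds, Metric.mem_nhds_iff] at hζ₀
  obtain ⟨η, hη, hsub⟩ := hζ₀
  refine ⟨ζ₀, mem_sphere_zero_iff_norm.1 ζ₀.2, η, hη, N, fun ζ hζ hd => ?_⟩
  have : (⟨ζ, mem_sphere_zero_iff_norm.2 hζ⟩ : sphere (0:ℂ) 1) ∈ E N := by
    apply hsub
    rw [mem_ball, Subtype.dist_eq, dist_eq_norm]
    exact hd
  exact this

/-- the averaged dilates -/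
def HH (g : ℂ → ℂ) (c : ℕ → ℂ) (K : ℕ) (z : ℂ) : ℂ := ∑ k ∈ Finset.range K, c k * g (rk k * z)

lemma HH_diff {g : ℂ → ℂ} (hg : HolOn g) (c : ℕ → ℂ) (K : ℕ) :
    DifferentiableOn ℂ (HH g c K) (closedBall (0:ℂ) 1) := by
  have : HH g c K = ∑ k ∈ Finset.range K, fun z => c k * g (rk k * z) := by
    ext z; simp [HH]
  rw [this]
  refine DifferentiableOn.sum fun k _ => DifferentiableOn.const_mul ?_ _
  refine DifferentiableOn.comp hg (by fun_prop) fun z hz => ?_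
  rw [mem_closedBall_zero_iff] at hz
  rw [mem_ball_zero_iff, norm_mul, Complex.norm_real, Real.norm_eq_abs, abs_of_nonneg (rk_nonneg k)]
  nlinarith [rk_nonneg k, rk_lt k, norm_nonneg z]

lemma HH_le {g : ℂ → ℂ} {c : ℕ → ℂ} (hc : ∀ k, ‖c k‖ ≤ 1) (K : ℕ) (z : ℂ) :
    ‖HH g c K z‖ ≤ ∑ k ∈ Finset.range K, ‖g (rk k * z)‖ := by
  refine (norm_sum_le _ _).trans (Finset.sum_le_sum fun k _ => ?_)
  rw [norm_mul]
  exact mul_le_of_le_one_left (norm_nonneg _) (hc k)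

lemma exists_c (g : ℂ → ℂ) (w : ℂ) : ∃ c : ℕ → ℂ, (∀ k, ‖c k‖ ≤ 1) ∧
    ∀ K, ‖HH g c K w‖ = ∑ k ∈ Finset.range K, ‖g (rk k * w)‖ := by
  have : ∀ x : ℂ, ∃ c : ℂ, ‖c‖ ≤ 1 ∧ c * x = (‖x‖ : ℂ) := by
    intro x
    by_cases hx : x = 0
    · exact ⟨0, by simp, by simp [hx]⟩
    · refine ⟨(‖x‖ : ℂ) / x, ?_, by field_simp⟩
      rw [norm_div]; simp [hx]
  choose C hC1 hC2 using this
  refine ⟨fun k => C (g (rk k * w)), fun k => hC1 _, fun K => ?_⟩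
  simp only [HH, hC2]
  rw [← Complex.ofReal_sum, Complex.norm_real, Real.norm_eq_abs,
    abs_of_nonneg (Finset.sum_nonneg fun _ _ => norm_nonneg _)]

lemma avg_lim {g : ℂ → ℂ} (hg : HolOn g) {w : ℂ} (hw : ‖w‖ < 1) :
    Tendsto (fun K : ℕ => (K:ℝ)⁻¹ * ∑ k ∈ Finset.range K, ‖g (rk k * w)‖) atTop (nhds ‖g w‖) := by
  apply Filter.Tendsto.cesaro
  have h1 : ContinuousAt g w :=
    (hg.differentiableAt (isOpen_ball.mem_nhds (by simpa using hw))).continuousAt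
  have h2 : Tendsto (fun k => (rk k : ℂ) * w) atTop (nhds w) := by
    have := ((Complex.continuous_ofReal.tendsto 1).comp rk_lim).mul_const w
    simpa using this
  exact (h1.tendsto.comp h2).norm

lemma x_le {p ε x : ℝ} (hp : 1 ≤ p) (hε : 0 < ε) (hx : 0 ≤ x) :
    x ≤ ε + ε ^ (1 - p) * x ^ p := by
  rcases le_total x ε with h | h
  · have : 0 ≤ ε ^ (1 - p) * x ^ p := by positivity
    linarith
  · have hx' : 0 < x := by linarith
    have h1 : ε ^ (p - 1) ≤ x ^ (p - 1) := Real.rpow_le_rpow hε.le h (by linarith)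
    have e1 : x ^ p = x ^ (p - 1) * x := by
      rw [← Real.rpow_add_one hx'.ne']; congr 1; ring
    have e2 : ε ^ (1 - p) * ε ^ (p - 1) = 1 := by
      rw [← Real.rpow_add hε]; simp
    have : x = ε ^ (1 - p) * (ε ^ (p - 1) * x) := by rw [← mul_assoc, e2, one_mul]
    have h3 : ε ^ (1 - p) * (ε ^ (p - 1) * x) ≤ ε ^ (1 - p) * x ^ p := by
      rw [e1]; gcongr
    linarith

lemma lens_zero {p : ℝ} (hp : 1 ≤ p) {g : ℂ → ℂ} (hg : HolOn g) {ζ₀ : ℂ} (hζ₀ : ‖ζ₀‖ = 1)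
    {η N : ℝ} (hη : 0 < η)
    (h : ∀ ζ : ℂ, ‖ζ‖ = 1 → ‖ζ - ζ₀‖ < η →
      (∀ r : ℝ, 0 ≤ r → r < 1 → ‖g (r * ζ)‖ ≤ N) ∧
      ∀ K : ℕ, ∑ k ∈ Finset.range K, ‖g (rk k * ζ)‖ ^ p ≤ N) :
    ∃ m : ℂ, ‖m‖ < 1 ∧ ∀ w, ‖w‖ < 1 → ‖2 * m - w‖ < 1 → g w * g (2 * m - w) = 0 := by
  have hN0 : 0 ≤ N := by
    have := (h ζ₀ hζ₀ (by simpa using hη)).2 0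
    simpa using this
  -- choose the chord midpoint `m`
  obtain ⟨τ, hτ0, hτ1, hτη⟩ : ∃ τ : ℝ, 0 < τ ∧ τ < 1 / 2 ∧ 4 * τ < η :=
    ⟨min (1 / 4) (η / 8), by positivity, by linarith [min_le_left (1 / 4) (η / 8)],
      by linarith [min_le_right (1 / 4) (η / 8)]⟩
  set κ : ℝ := τ ^ 2 / 2 with hκ
  have hκ0 : 0 < κ := by positivity
  have hκ1 : κ < 1 / 2 := by nlinarith
  set m : ℂ := ((1 - κ : ℝ) : ℂ) * ζ₀ with hm
  have hmn : ‖m‖ = 1 - κ := by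
    rw [hm, norm_mul, hζ₀, mul_one, Complex.norm_real, Real.norm_eq_abs, abs_of_pos (by linarith)]
  have hmζ : ‖m - ζ₀‖ = κ := by
    have : m - ζ₀ = ((-κ : ℝ) : ℂ) * ζ₀ := by rw [hm]; push_cast; ring
    rw [this, norm_mul, hζ₀, mul_one, Complex.norm_real, Real.norm_eq_abs, abs_neg, abs_of_pos hκ0]
  -- every point of the closed lens is close to `ζ₀`
  have hlens : ∀ z : ℂ, ‖z‖ ≤ 1 → ‖2 * m - z‖ ≤ 1 → ‖z - ζ₀‖ < 2 * τ := by
    intro z h1 h2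
    have hpar := parallelogram_law_with_norm ℝ (z - m) m
    rw [show z - m + m = z by ring, show z - m - m = -(2 * m - z) by ring, norm_neg, hmn] at hpar
    have h3 : ‖z - m‖ ^ 2 ≤ τ ^ 2 := by nlinarith [norm_nonneg z, norm_nonneg (2 * m - z)]
    have h4 : ‖z - m‖ ≤ τ := abs_le_of_sq_le_sq' h3 hτ0.le |>.2
    have h5 : ‖z - ζ₀‖ ≤ ‖z - m‖ + ‖m - ζ₀‖ := by
      have := norm_add_le (z - m) (m - ζ₀); simpa using this
    rw [hmζ] at h5
    nlinarith
  have hbd : ∀ z : ℂ, ‖z‖ ≤ 1 → ‖2 * m - z‖ ≤ 1 → ∀ k, ‖g (rk k * z)‖ ≤ N := by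
    intro z h1 h2 k
    have h3 := hlens z h1 h2
    have hz0 : 0 < ‖z‖ := by
      have : ‖ζ₀‖ ≤ ‖z‖ + ‖z - ζ₀‖ := by
        have := norm_sub_le z (z - ζ₀); simpa using this
      linarith
    set ζ : ℂ := z / (‖z‖ : ℂ) with hζ
    have hzc : (‖z‖ : ℂ) ≠ 0 := by exact_mod_cast hz0.ne'
    have hζn : ‖ζ‖ = 1 := by
      rw [hζ, norm_div, Complex.norm_real, norm_norm, div_self hz0.ne']
    have hζz : z = (‖z‖ : ℂ) * ζ := by rw [hζ]; field_simp
    have hdist : ‖ζ - ζ₀‖ < η := by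
      have a1 : ‖ζ - z‖ = 1 - ‖z‖ := by
        have : ζ - z = ((1 - ‖z‖ : ℝ) : ℂ) * ζ := by
          push_cast; linear_combination (-1:ℂ) * hζz
        rw [this, norm_mul, hζn, mul_one, Complex.norm_real, Real.norm_eq_abs,
          abs_of_nonneg (by linarith)]
      have a2 : ‖ζ - ζ₀‖ ≤ ‖ζ - z‖ + ‖z - ζ₀‖ := by
        have := norm_add_le (ζ - z) (z - ζ₀); simpa using this
      have a3 : ‖ζ₀‖ ≤ ‖z‖ + ‖z - ζ₀‖ := by
        have := norm_sub_le z (z - ζ₀); simpa using this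
      linarith
    have := (h ζ hζn hdist).1 (rk k * ‖z‖) (by have := rk_nonneg k; positivity)
      (by nlinarith [rk_nonneg k, rk_lt k])
    rw [hζz]
    convert this using 3
    push_cast; ring
  have hsm : ∀ ε > 0, ∀ z : ℂ, ‖z‖ = 1 → ‖2 * m - z‖ ≤ 1 → ∀ K : ℕ,
      ∑ k ∈ Finset.range K, ‖g (rk k * z)‖ ≤ K * ε + ε ^ (1 - p) * N := by
    intro ε hε z h1 h2 K
    have h3 := hlens z h1.le h2
    have h4 := (h z h1 (by linarith)).2 K
    calc ∑ k ∈ Finset.range K, ‖g (rk k * z)‖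
        ≤ ∑ k ∈ Finset.range K, (ε + ε ^ (1 - p) * ‖g (rk k * z)‖ ^ p) :=
          Finset.sum_le_sum fun k _ => x_le hp hε (norm_nonneg _)
      _ = K * ε + ε ^ (1 - p) * ∑ k ∈ Finset.range K, ‖g (rk k * z)‖ ^ p := by
          rw [Finset.sum_add_distrib, Finset.mul_sum]; simp
      _ ≤ _ := by gcongr
  refine ⟨m, by linarith, fun w hw1 hw2 => ?_⟩
  obtain ⟨c, hc, hcw⟩ := exists_c g w
  obtain ⟨c', hc', hcw'⟩ := exists_c g (2 * m - w)
  set U : Set ℂ := ball 0 1 ∩ ball (2 * m) 1 with hU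
  have hUo : IsOpen U := isOpen_ball.inter isOpen_ball
  have hUcl : closure U ⊆ closedBall 0 1 ∩ closedBall (2 * m) 1 :=
    closure_minimal (inter_subset_inter ball_subset_closedBall ball_subset_closedBall)
      (isClosed_closedBall.inter isClosed_closedBall)
  have hmain : ∀ ε > 0, ∀ K : ℕ,
      (∑ k ∈ Finset.range K, ‖g (rk k * w)‖) * (∑ k ∈ Finset.range K, ‖g (rk k * (2 * m - w))‖) ≤
        (K * ε + ε ^ (1 - p) * N) * (K * N) := by
    intro ε hε K
    have hd : DiffContOnCl ℂ (fun z => HH g c K z * HH g c' K (2 * m - z)) U := by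
      apply DifferentiableOn.diffContOnCl
      apply DifferentiableOn.mul
      · exact (HH_diff hg c K).mono fun z hz => (hUcl hz).1
      · refine (HH_diff hg c' K).comp (by fun_prop) fun z hz => ?_
        have := (hUcl hz).2
        rw [mem_closedBall, dist_eq_norm] at this
        rw [mem_closedBall_zero_iff, norm_sub_rev]; exact this
    have hbig : ∀ (c : ℕ → ℂ), (∀ k, ‖c k‖ ≤ 1) → ∀ z : ℂ, ‖z‖ ≤ 1 → ‖2 * m - z‖ ≤ 1 →
        ‖HH g c K z‖ ≤ K * N := by
      intro c hc z h1 h2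
      refine (HH_le hc K z).trans ((Finset.sum_le_sum fun k _ => hbd z h1 h2 k).trans ?_)
      simp
    have hfr : ∀ z ∈ frontier U, ‖HH g c K z * HH g c' K (2 * m - z)‖ ≤
        (K * ε + ε ^ (1 - p) * N) * (K * N) := by
      intro z hz
      rw [hUo.frontier_eq] at hz
      obtain ⟨z1, z2⟩ := hUcl hz.1
      rw [mem_closedBall_zero_iff] at z1
      rw [mem_closedBall, dist_eq_norm, norm_sub_rev] at z2
      have z3 : ‖2 * m - (2 * m - z)‖ ≤ 1 := by simpa using z1
      rw [norm_mul]
      have hor : ‖z‖ = 1 ∨ ‖2 * m - z‖ = 1 := by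
        by_contra hcon
        push Not at hcon
        apply hz.2
        refine ⟨?_, ?_⟩
        · rw [mem_ball_zero_iff]; exact lt_of_le_of_ne z1 hcon.1
        · rw [mem_ball, dist_eq_norm, norm_sub_rev]; exact lt_of_le_of_ne z2 hcon.2
      rcases hor with ho | ho
      · have b1 := (HH_le hc K z).trans (hsm ε hε z ho z2 K)
        have b2 := hbig c' hc' (2 * m - z) z2 z3
        gcongr
      · have b1 := (HH_le hc' K (2 * m - z)).trans (hsm ε hε _ ho z3 K)
        have b2 := hbig c hc z z1 z2
        rw [mul_comm]
        gcongr
    have hwU : w ∈ U := by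
      refine ⟨by rwa [mem_ball_zero_iff], ?_⟩
      rw [mem_ball, dist_eq_norm, norm_sub_rev]; exact hw2
    have := Complex.norm_le_of_forall_mem_frontier_norm_le
      (isBounded_ball.subset inter_subset_left) hd hfr (subset_closure hwU)
    rwa [norm_mul, hcw, hcw'] at this
  have hlim : ∀ ε > 0, ‖g w‖ * ‖g (2 * m - w)‖ ≤ ε * N := by
    intro ε hε
    have l1 := (avg_lim hg hw1).mul (avg_lim hg hw2)
    have l2 : Tendsto (fun K : ℕ => (ε + ε ^ (1 - p) * N * (K:ℝ)⁻¹) * N) atTop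
        (nhds ((ε + ε ^ (1 - p) * N * 0) * N)) :=
      (((tendsto_inv_atTop_nhds_zero_nat (𝕜 := ℝ)).const_mul _).const_add _).mul_const _
    rw [mul_zero, add_zero] at l2
    refine le_of_tendsto_of_tendsto l1 l2 ?_
    filter_upwards [eventually_gt_atTop 0] with K hK
    have hK' : (0:ℝ) < K := by exact_mod_cast hK
    have := hmain ε hε K
    calc _ = (K:ℝ)⁻¹ * (K:ℝ)⁻¹ * ((∑ k ∈ Finset.range K, ‖g (rk k * w)‖) *
          (∑ k ∈ Finset.range K, ‖g (rk k * (2 * m - w))‖)) := by ring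
      _ ≤ (K:ℝ)⁻¹ * (K:ℝ)⁻¹ * ((K * ε + ε ^ (1 - p) * N) * (K * N)) := by gcongr
      _ = _ := by field_simp
  rw [← norm_eq_zero, norm_mul]
  refine le_antisymm (le_of_forall_pos_le_add fun δ hδ => ?_) (by positivity)
  have := hlim (δ / (N + 1)) (by positivity)
  refine this.trans ?_
  rw [zero_add, div_mul_eq_mul_div, div_le_iff₀ (by positivity)]
  nlinarith

lemma zero_of_prod {g : ℂ → ℂ} (hg : HolOn g) {m : ℂ} (hm : ‖m‖ < 1)
    (h : ∀ w, ‖w‖ < 1 → ‖2 * m - w‖ < 1 → g w * g (2 * m - w) = 0) :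
    ∀ z ∈ ball (0:ℂ) 1, g z = 0 := by
  have hmb : m ∈ ball (0:ℂ) 1 := by simpa using hm
  have han : AnalyticOnNhd ℂ g (ball 0 1) := DifferentiableOn.analyticOnNhd hg isOpen_ball
  rcases (han m hmb).eventually_eq_zero_or_eventually_ne_zero with h0 | h0
  · exact han.eqOn_zero_of_preconnected_of_eventuallyEq_zero
      (convex_ball (0:ℂ) 1).isPreconnected hmb h0
  · exfalso
    have ht0 : Tendsto (fun w => 2 * m - w) (nhds m) (nhds m) := by
      have : Continuous (fun w : ℂ => 2 * m - w) := by fun_prop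
      have h := this.tendsto m
      simpa [two_mul] using h
    have ht : Tendsto (fun w => 2 * m - w) (nhdsWithin m {m}ᶜ) (nhdsWithin m {m}ᶜ) := by
      refine tendsto_nhdsWithin_of_tendsto_nhds_of_eventually_within _
        (ht0.mono_left nhdsWithin_le_nhds) ?_
      filter_upwards [self_mem_nhdsWithin] with w hw
      intro hcon
      apply hw
      have hcon' : 2 * m - w = m := hcon
      rw [mem_singleton_iff]
      linear_combination -hcon'
    have hb1 : ∀ᶠ w in nhdsWithin m {m}ᶜ, w ∈ ball (0:ℂ) 1 :=
      mem_nhdsWithin_of_mem_nhds (isOpen_ball.mem_nhds hmb)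
    obtain ⟨w, w1, w2, w3, w4⟩ := (h0.and ((ht.eventually h0).and (hb1.and (ht.eventually hb1)))).exists
    exact (mul_ne_zero w1 w2) (h w (by simpa using w3) (by simpa using w4))

lemma rev {p : ℝ} (hp : 1 ≤ p) {g f : ℂ → ℂ} (h : ∀ z ∈ ball (0:ℂ) 1, g z = 0) :
    Mg g f ∈ BesovFull p := by
  have h0 : ∀ z ∈ ball (0:ℂ) 1, Mg g f z = 0 := fun z hz => by simp [Mg, h z hz]
  have hH : HolOn (Mg g f) := (differentiableOn_const (0:ℂ)).congr h0
  have h1 : ∀ z ∈ ball (0:ℂ) 1, deriv (Mg g f) z = 0 := fun z hz => by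
    have : Mg g f =ᶠ[nhds z] fun _ => 0 := by
      filter_upwards [isOpen_ball.mem_nhds hz] with w hw using h0 w hw
    rw [this.deriv_eq]; simp
  have h2 : ∀ z ∈ ball (0:ℂ) 1, deriv (deriv (Mg g f)) z = 0 := fun z hz => by
    have : deriv (Mg g f) =ᶠ[nhds z] fun _ => 0 := by
      filter_upwards [isOpen_ball.mem_nhds hz] with w hw using h1 w hw
    rw [this.deriv_eq]; simp
  unfold BesovFull
  split_ifs
  · refine ⟨hH, ?_⟩
    rw [setLIntegral_congr_fun (g := fun _ => 0) measurableSet_ball fun z hz => by simp [h2 z hz]]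
    simp
  · refine ⟨hH, ?_⟩
    rw [setLIntegral_congr_fun (g := fun _ => 0) measurableSet_ball fun z hz => by
      simp [h1 z hz, Real.zero_rpow (by linarith : p ≠ 0)]]
    simp

end S14
end

/-- For `0 < s < ∞`, `1 ≤ p < ∞`, and `g` holomorphic on the unit disc:
`M_g` maps `Q_s` into `Bᵖ` iff `g ≡ 0` (on the disc). -/
theorem stmt14 (p s : ℝ) (hp : 1 ≤ p) (hs : 0 < s) (g : ℂ → ℂ) (hg : HolOn g) :
    MapsInto (Mg g) (Qs s) (BesovFull p) ↔ ∀ z ∈ Metric.ball (0:ℂ) 1, g z = 0 := by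

  constructor
  · intro H
    obtain ⟨ζ₀, h1, η, hη, N, h2⟩ := S14.baire hp hg fun ζ hζ =>
      S14.pointwise_bdd hp hζ (S14.meas_exists hp hs hg H hζ)
    obtain ⟨m, hm, h3⟩ := S14.lens_zero hp hg h1 hη h2
    exact S14.zero_of_prod hg hm h3
  · intro h f _
    exact S14.rev hp h
end

section
/- Suppose 0 < s₁ < s₂ ≤ 1 and let g be holomorphic on the unit disc D. Then the following are equivalent: (i) the operator I_g maps Q_{s₂} into Q_{s₁}; (ii) the multiplication operator M_g maps Q_{s₂} into Q_{s₁}; (iii) g is identically zero. -/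
open MeasureTheory Metric Complex Real Filter Set

lemma q_phi_identity (a z : ℂ) (ha : ‖a‖ < 1) (hz : ‖z‖ < 1) :
    1 - ‖phi a z‖ ^ 2 =
      (1 - ‖a‖ ^ 2) * (1 - ‖z‖ ^ 2) / ‖1 - (starRingEnd ℂ) a * z‖ ^ 2 := by
  have h0 : (1 - (starRingEnd ℂ) a * z) ≠ 0 := by
    intro h
    have h1 : (starRingEnd ℂ) a * z = 1 := (sub_eq_zero.mp h).symm
    have h2 : ‖(starRingEnd ℂ) a * z‖ = 1 := by rw [h1]; simp
    rw [norm_mul, RCLike.norm_conj] at h2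
    nlinarith [norm_nonneg a, norm_nonneg z]
  have h1 : ‖1 - (starRingEnd ℂ) a * z‖ ^ 2 ≠ 0 := by
    simpa using h0
  rw [phi, norm_div, div_pow, eq_div_iff h1, sub_mul, div_mul_cancel₀ _ h1, one_mul]
  simp only [← Complex.normSq_eq_norm_sq, Complex.normSq_apply]
  simp
  ring

lemma q_one_sub_ne (a z : ℂ) (ha : ‖a‖ < 1) (hz : ‖z‖ ≤ 1) :
    (1 - a * z) ≠ 0 := by
  intro h
  have h1 : a * z = 1 := (sub_eq_zero.mp h).symm
  have h2 : ‖a * z‖ = 1 := by rw [h1]; simp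
  rw [norm_mul] at h2
  nlinarith [norm_nonneg a, norm_nonneg z]

lemma q_circle (u : ℂ → ℝ) (r : ℝ) (hr : 0 ≤ r) (hu : ContinuousOn u (Metric.sphere 0 r))
    (hu0 : ∀ z ∈ Metric.sphere (0:ℂ) r, 0 ≤ u z) :
    ∫⁻ θ in Ioo (-π) π, ENNReal.ofReal (u (r * Complex.exp (θ * I))) =
      ENNReal.ofReal (2 * π * circleAverage u 0 r) := by
  have hmem : ∀ θ : ℝ, (r * Complex.exp (θ * I)) ∈ Metric.sphere (0:ℂ) r := by
    intro θ
    simp [Complex.norm_exp_ofReal_mul_I, abs_of_nonneg hr]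
  have hc : Continuous fun θ : ℝ => u (r * Complex.exp (θ * I)) := by
    have : Continuous fun θ : ℝ => (r * Complex.exp (θ * I) : ℂ) := by fun_prop
    exact hu.comp_continuous this hmem
  have hper : Function.Periodic (fun θ : ℝ => u (r * Complex.exp (θ * I))) (2 * π) := by
    intro θ
    simp only
    congr 2
    push_cast
    rw [add_mul, Complex.exp_periodic]
  have hpi := Real.pi_pos
  have h1 : circleAverage u 0 r = (2 * π)⁻¹ * ∫ θ in (-π)..π, u (r * Complex.exp (θ * I)) := by
    rw [circleAverage_def]
    simp only [circleMap, zero_add, smul_eq_mul]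
    congr 1
    have := hper.intervalIntegral_add_eq 0 (-π)
    rw [zero_add, show -π + 2 * π = π by ring] at this
    exact this
  rw [h1, ← mul_assoc, mul_inv_cancel₀ (by positivity), one_mul,
    intervalIntegral.integral_of_le (by linarith), MeasureTheory.integral_Ioc_eq_integral_Ioo,
    ofReal_integral_eq_lintegral_ofReal]
  · exact (hc.integrableOn_Icc).mono_set Ioo_subset_Icc_self
  · exact Eventually.of_forall fun θ => hu0 _ (hmem θ)

lemma q_poisson (b : ℂ) (r : ℝ) (hr : 0 < r) (hr1 : r < 1) (hb : ‖b‖ < 1) :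
    circleAverage (fun z => (1 - ‖b‖ ^ 2) / ‖1 - b * z‖ ^ 2) 0 r ≤ 1 := by
  have hne : ∀ z ∈ Metric.closedBall (0:ℂ) r, (1 - b * z) ≠ 0 := by
    intro z hz
    apply q_one_sub_ne b z hb
    have : ‖z‖ ≤ r := by simpa using hz
    linarith
  have hd : DifferentiableOn ℂ (fun z => (1 + b * z) / (1 - b * z)) (Metric.closedBall 0 r) := by
    apply DifferentiableOn.div (by fun_prop) (by fun_prop) hne
  have h1 : circleAverage (fun z => (1 + b * z) / (1 - b * z)) 0 r = 1 := by
    have : DiffContOnCl ℂ (fun z => (1 + b * z) / (1 - b * z)) (ball 0 |r|) := by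
      rw [abs_of_pos hr]
      apply DifferentiableOn.diffContOnCl
      rwa [closure_ball _ hr.ne']
    rw [this.circleAverage]
    simp
  have hci : CircleIntegrable (fun z => (1 + b * z) / (1 - b * z)) 0 r := by
    apply ContinuousOn.circleIntegrable hr.le
    exact hd.continuousOn.mono sphere_subset_closedBall
  have h2 : circleAverage (fun z => ((1 + b * z) / (1 - b * z)).re) 0 r = 1 := by
    have := Complex.reCLM.circleAverage_comp_comm hci
    rw [h1] at this
    simpa [Function.comp_def] using this
  refine le_trans (circleAverage_mono ?_ ?_ ?_) h2.le
  · apply ContinuousOn.circleIntegrable hr.le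
    apply ContinuousOn.div (by fun_prop) (by fun_prop)
    intro z hz
    have := hne z (sphere_subset_closedBall hz)
    simpa using this
  · apply ContinuousOn.circleIntegrable hr.le
    exact Complex.continuous_re.comp_continuousOn (hd.continuousOn.mono sphere_subset_closedBall)
  · intro z hz
    rw [abs_of_pos hr] at hz
    have hz' : ‖z‖ = r := by simpa using hz
    have : ((1 + b * z) / (1 - b * z)).re = (1 - ‖b * z‖ ^ 2) / ‖1 - b * z‖ ^ 2 := by
      rw [Complex.div_re, ← add_div, ← Complex.normSq_eq_norm_sq, ← Complex.normSq_eq_norm_sq]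
      congr 1
      simp only [Complex.normSq_apply]
      simp
      ring
    simp only [this]
    gcongr
    rw [norm_mul, hz']
    nlinarith [norm_nonneg b]

lemma q_polar (f : ℂ → ENNReal) (hf : Measurable f) :
    ∫⁻ z in Metric.ball (0:ℂ) 1, f z ∂dA = (ENNReal.ofReal π)⁻¹ *
      ∫⁻ r in Ioo (0:ℝ) 1, ENNReal.ofReal r *
        ∫⁻ θ in Ioo (-π) π, f (r * Complex.exp (θ * I)) := by
  rw [dA, Measure.restrict_smul, lintegral_smul_measure, smul_eq_mul]
  congr 1
  rw [← lintegral_indicator measurableSet_ball, ← Complex.lintegral_comp_polarCoord_symm]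
  have hm : Measurable ((Metric.ball (0:ℂ) 1).indicator f) := hf.indicator measurableSet_ball
  have hsymm : ∀ p : ℝ × ℝ, Complex.polarCoord.symm p = p.1 * Complex.exp (p.2 * I) := by
    intro p
    rw [Complex.polarCoord_symm_apply, Complex.exp_mul_I]
    push_cast; ring
  simp_rw [hsymm]
  rw [polarCoord_target, Measure.volume_eq_prod, ← Measure.prod_restrict, lintegral_prod]
  · have : Ioo (0:ℝ) 1 = Iio 1 ∩ Ioi 0 := by ext x; simp [and_comm]
    rw [this, ← Measure.restrict_restrict measurableSet_Iio, ← lintegral_indicator measurableSet_Iio]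
    apply lintegral_congr_ae
    filter_upwards [ae_restrict_mem measurableSet_Ioi] with r hr
    have hr0 : 0 < r := hr
    simp only [smul_eq_mul]
    rw [lintegral_const_mul']
    swap
    · simp
    by_cases h : r < 1
    · rw [Set.indicator_of_mem (show r ∈ Iio 1 from h)]
      congr 1
      apply lintegral_congr
      intro θ
      rw [Set.indicator_of_mem]
      simp [Complex.norm_exp_ofReal_mul_I, abs_of_pos hr0, h]
    · rw [Set.indicator_of_notMem (show r ∉ Iio 1 from h)]
      convert mul_zero _
      rw [← lintegral_zero]
      apply lintegral_congr
      intro θ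
      rw [Set.indicator_of_notMem]
      simpa [Complex.norm_exp_ofReal_mul_I, abs_of_pos hr0] using h
  · apply Measurable.aemeasurable
    simp only [smul_eq_mul]
    apply Measurable.mul
    · fun_prop
    · apply hm.comp
      fun_prop

lemma q_rpow_le (t s : ℝ) (ht : 0 ≤ t) (hs0 : 0 < s) (hs : s ≤ 1) : t ^ s ≤ 1 + t := by
  rcases le_total t 1 with h | h
  · have := Real.rpow_le_one ht h hs0.le
    linarith
  · have := Real.rpow_le_rpow_of_exponent_le h hs
    rw [Real.rpow_one] at this
    linarith

lemma q_radial (N : ℕ) :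
    ∫⁻ r in Ioo (0:ℝ) 1, ENNReal.ofReal r * ENNReal.ofReal (2 * π *
      (((N:ℝ) + 1) * r ^ (2 * N) + ((N:ℝ) + 1) ^ 2 * r ^ (2 * N) * (1 - r ^ 2)))
      ≤ ENNReal.ofReal (2 * π) := by
  have h1 : ∫⁻ r in Ioo (0:ℝ) 1, ENNReal.ofReal r * ENNReal.ofReal (2 * π *
      (((N:ℝ) + 1) * r ^ (2 * N) + ((N:ℝ) + 1) ^ 2 * r ^ (2 * N) * (1 - r ^ 2)))
      = ∫⁻ r in Ioo (0:ℝ) 1, ENNReal.ofReal (2 * π *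
      (((N:ℝ) + 1) * r ^ (2 * N + 1) + ((N:ℝ) + 1) ^ 2 * (r ^ (2 * N + 1) - r ^ (2 * N + 3)))) := by
    apply setLIntegral_congr_fun measurableSet_Ioo
    intro r hr
    simp only
    rw [← ENNReal.ofReal_mul hr.1.le]
    congr 1
    ring
  have hc : Continuous fun r : ℝ => (2 * π *
      (((N:ℝ) + 1) * r ^ (2 * N + 1) + ((N:ℝ) + 1) ^ 2 * (r ^ (2 * N + 1) - r ^ (2 * N + 3)))) := by
    fun_prop
  rw [h1, ← ofReal_integral_eq_lintegral_ofReal]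
  · apply ENNReal.ofReal_le_ofReal
    rw [← MeasureTheory.integral_Ioc_eq_integral_Ioo,
      ← intervalIntegral.integral_of_le zero_le_one]
    rw [intervalIntegral.integral_const_mul, intervalIntegral.integral_add,
      intervalIntegral.integral_const_mul, intervalIntegral.integral_const_mul,
      intervalIntegral.integral_sub, integral_pow, integral_pow]
    · have : (0:ℝ) ≤ N := Nat.cast_nonneg N
      have h2 : ((N:ℝ) + 1) * ((1 ^ (2 * N + 1 + 1) - 0 ^ (2 * N + 1 + 1)) / (((2 * N + 1 : ℕ):ℝ) + 1))
        + ((N:ℝ) + 1) ^ 2 * ((1 ^ (2 * N + 1 + 1) - 0 ^ (2 * N + 1 + 1)) / (((2 * N + 1 : ℕ):ℝ) + 1)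
        - (1 ^ (2 * N + 3 + 1) - 0 ^ (2 * N + 3 + 1)) / (((2 * N + 3 : ℕ):ℝ) + 1)) ≤ 1 := by
        push_cast
        simp
        have e1 : (2 * (N:ℝ) + 1 + 1)⁻¹ = ((N:ℝ) + 1)⁻¹ / 2 := by field_simp; ring
        have e2 : (2 * (N:ℝ) + 3 + 1)⁻¹ = ((N:ℝ) + 2)⁻¹ / 2 := by field_simp; ring
        rw [e1, e2]
        have : ((N:ℝ) + 1) * (((N:ℝ) + 1)⁻¹ / 2) +
          ((N:ℝ) + 1) ^ 2 * (((N:ℝ) + 1)⁻¹ / 2 - ((N:ℝ) + 2)⁻¹ / 2)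
          = 1 / 2 + ((N:ℝ) + 1) / (((N:ℝ) + 2) * 2) := by
          field_simp
          ring
        rw [this]
        have : ((N:ℝ) + 1) / (((N:ℝ) + 2) * 2) ≤ 1 / 2 := by
          rw [div_le_div_iff₀ (by positivity) (by positivity)]
          linarith
        linarith
      have hpi := Real.pi_pos
      nlinarith
    all_goals exact Continuous.intervalIntegrable (by fun_prop) _ _
  · exact (hc.integrableOn_Icc).mono_set Ioo_subset_Icc_self
  · filter_upwards [ae_restrict_mem measurableSet_Ioo] with r hr
    have : r ^ (2 * N + 3) ≤ r ^ (2 * N + 1) :=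
      pow_le_pow_of_le_one hr.1.le hr.2.le (by omega)
    have h3 : 0 ≤ r ^ (2 * N + 1) := pow_nonneg hr.1.le _
    have hpi := Real.pi_pos
    have := sub_nonneg.mpr this
    simp only [Pi.zero_apply]
    positivity

lemma q_mono (s : ℝ) (hs0 : 0 < s) (hs : s ≤ 1) (a : ℂ) (ha : ‖a‖ < 1) (N : ℕ) :
    ∫⁻ z in Metric.ball (0:ℂ) 1, ENNReal.ofReal (((N:ℝ) + 1) ^ (1 + s) * ‖z‖ ^ (2 * N) *
      (1 - ‖phi a z‖ ^ 2) ^ s) ∂dA ≤ 2 := by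
  set M : ℝ := (N:ℝ) + 1 with hM
  have hM0 : 0 < M := by positivity
  have hca : ‖(starRingEnd ℂ) a‖ < 1 := by rwa [RCLike.norm_conj]
  set b := (starRingEnd ℂ) a with hb
  have hba : ‖a‖ = ‖b‖ := by rw [hb, RCLike.norm_conj]
  set P : ℂ → ℝ := fun z => (1 - ‖b‖ ^ 2) / ‖1 - b * z‖ ^ 2 with hP
  have hb1 : 0 ≤ 1 - ‖b‖ ^ 2 := by nlinarith [norm_nonneg b]
  have hP0 : ∀ z, 0 ≤ P z := fun z => by simp only [hP]; positivity
  have hPm : Measurable P := by simp only [hP]; fun_prop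
  set F : ℂ → ENNReal := fun z => ENNReal.ofReal (M * ‖z‖ ^ (2 * N)) +
    ENNReal.ofReal (M ^ 2 * ‖z‖ ^ (2 * N) * (1 - ‖z‖ ^ 2)) * ENNReal.ofReal (P z) with hF
  have hFm : Measurable F := by simp only [hF]; fun_prop
  calc _ ≤ ∫⁻ z in Metric.ball (0:ℂ) 1, F z ∂dA := by
        apply setLIntegral_mono hFm
        intro z hz
        have hz1 : ‖z‖ < 1 := by simpa using hz
        have hz2 : 0 ≤ 1 - ‖z‖ ^ 2 := by nlinarith [norm_nonneg z]
        simp only [hF]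
        rw [← ENNReal.ofReal_mul (by positivity), ← ENNReal.ofReal_add (by positivity)
          (mul_nonneg (by positivity) (hP0 z))]
        apply ENNReal.ofReal_le_ofReal
        have hphi : 1 - ‖phi a z‖ ^ 2 = (1 - ‖z‖ ^ 2) * P z := by
          rw [q_phi_identity a z ha hz1, hP, hba]
          simp only
          ring
        rw [hphi]
        have ht : 0 ≤ (1 - ‖z‖ ^ 2) * P z := mul_nonneg hz2 (hP0 z)
        have := q_rpow_le (M * ((1 - ‖z‖ ^ 2) * P z)) s (by positivity) hs0 hs
        rw [Real.mul_rpow hM0.le ht] at this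
        rw [Real.rpow_add hM0, Real.rpow_one]
        calc M * M ^ s * ‖z‖ ^ (2 * N) * ((1 - ‖z‖ ^ 2) * P z) ^ s
            = M * ‖z‖ ^ (2 * N) * (M ^ s * ((1 - ‖z‖ ^ 2) * P z) ^ s) := by ring
          _ ≤ M * ‖z‖ ^ (2 * N) * (1 + M * ((1 - ‖z‖ ^ 2) * P z)) := by gcongr
          _ = _ := by ring
    _ = (ENNReal.ofReal π)⁻¹ *
      ∫⁻ r in Ioo (0:ℝ) 1, ENNReal.ofReal r *
        ∫⁻ θ in Ioo (-π) π, F (r * Complex.exp (θ * I)) := q_polar F hFm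
    _ ≤ (ENNReal.ofReal π)⁻¹ * ENNReal.ofReal (2 * π) := by
        gcongr
        refine le_trans ?_ (q_radial N)
        apply setLIntegral_mono (by fun_prop)
        intro r hr
        have hr2 : 0 ≤ 1 - r ^ 2 := by nlinarith [hr.1, hr.2]
        have hr0 := hr.1
        gcongr
        have hn : ∀ θ : ℝ, ‖(r * Complex.exp (θ * I) : ℂ)‖ = r := by
          intro θ
          simp [Complex.norm_exp_ofReal_mul_I, abs_of_pos hr.1]
        simp only [hF, hn]
        rw [lintegral_add_left (by fun_prop), lintegral_const_mul' _ _ (by simp),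
          setLIntegral_const, q_circle P r hr.1.le]
        · have hp := q_poisson b r hr.1 hr.2 hca
          have hpi := Real.pi_pos
          rw [Real.volume_Ioo, ← ENNReal.ofReal_mul (by positivity),
            ← ENNReal.ofReal_mul (by positivity), ← ENNReal.ofReal_add]
          · apply ENNReal.ofReal_le_ofReal
            have : M ^ 2 * r ^ (2 * N) * (1 - r ^ 2) * (2 * π * circleAverage P 0 r)
              ≤ M ^ 2 * r ^ (2 * N) * (1 - r ^ 2) * (2 * π * 1) := by
              gcongr
            linarith
          · have : 0 ≤ π - -π := by linarith
            positivity
          · have : 0 ≤ circleAverage P 0 r :=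
              circleAverage_nonneg_of_nonneg fun z _ => hP0 z
            positivity
        · apply ContinuousOn.div (by fun_prop) (by fun_prop)
          intro z hz
          have hz' : ‖z‖ = r := by simpa using hz
          have := q_one_sub_ne b z hca (by rw [hz']; exact hr.2.le)
          simpa using this
        · intro z _
          exact hP0 z
    _ = 2 := by
        rw [← ENNReal.ofReal_inv_of_pos Real.pi_pos, ← ENNReal.ofReal_mul (by positivity)]
        have : π⁻¹ * (2 * π) = 2 := by field_simp
        rw [this]
        simp

lemma q_lower_mean (h : ℂ → ℂ) (hh : HolOn h) (hne : ∃ z ∈ Metric.ball (0:ℂ) 1, h z ≠ 0) :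
    ∃ c : ℝ, 0 < c ∧ ∀ r : ℝ, 1 / 2 ≤ r → r < 1 → c ≤ circleAverage (fun z => ‖h z‖) 0 r := by
  have key : ∀ r : NNReal, 0 < r → r < 1 →
      HasFPowerSeriesOnBall h (cauchyPowerSeries h 0 r) 0 r := by
    intro r hr hr1
    apply DifferentiableOn.hasFPowerSeriesOnBall _ hr
    apply hh.mono
    exact closedBall_subset_ball (by exact_mod_cast hr1)
  have hhalf : (1/2 : NNReal) < 1 := by
    rw [← NNReal.coe_lt_coe]; push_cast; norm_num
  have k0 := (key (1/2) (by positivity) hhalf).hasFPowerSeriesAt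
  set p := cauchyPowerSeries h 0 ((1/2 : NNReal) : ℝ) with hp
  have hpne : ∃ m, p m ≠ 0 := by
    by_contra! hcon
    have hp0 : p = 0 := by
      ext1 m
      exact hcon m
    rw [hp0] at k0
    have hev := k0.eventually_eq_zero
    have han : AnalyticOnNhd ℂ h (Metric.ball 0 1) := hh.analyticOnNhd isOpen_ball
    have := han.eqOn_zero_of_preconnected_of_eventuallyEq_zero
      (convex_ball _ _).isPreconnected (mem_ball_self one_pos) hev
    obtain ⟨z, hz, hz'⟩ := hne
    exact hz' (this hz)
  obtain ⟨m, hm⟩ := hpne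
  refine ⟨‖p m‖ * (1/2) ^ m, by have := norm_pos_iff.mpr hm; positivity, ?_⟩
  intro r hr hr1
  have hr0 : 0 < r := by linarith
  have k1 := (key ⟨r, hr0.le⟩ (by exact_mod_cast hr0) (by exact_mod_cast hr1)).hasFPowerSeriesAt
  have heq := k0.eq_formalMultilinearSeries k1
  have hle := norm_cauchyPowerSeries_le h 0 r m
  have : p m = cauchyPowerSeries h 0 r m := by
    rw [heq]; rfl
  rw [← this, abs_of_pos hr0] at hle
  have hca : circleAverage (fun z => ‖h z‖) 0 r =
      (2 * π)⁻¹ * ∫ (θ : ℝ) in 0..2 * π, ‖h (circleMap 0 r θ)‖ := by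
    rw [circleAverage_def, smul_eq_mul]
  rw [← hca, inv_pow, ← div_eq_mul_inv, le_div_iff₀ (by positivity)] at hle
  refine le_trans ?_ hle
  gcongr

lemma q_lower (s₁ s₂ : ℝ) (hs0 : 0 < s₁) (g : ℂ → ℂ) (hg : HolOn g)
    (hne : ∃ z ∈ Metric.ball (0:ℂ) 1, g z ≠ 0) :
    ∃ c : ℝ, 0 < c ∧ ∀ N : ℕ, ENNReal.ofReal (c * ((N:ℝ) + 1) ^ (s₂ - s₁)) ≤
      ∫⁻ z in Metric.ball (0:ℂ) 1, ENNReal.ofReal (((N:ℝ) + 1) ^ (1 + s₂) * ‖z‖ ^ (2 * N) *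
        ‖g z‖ ^ 2 * (1 - ‖z‖ ^ 2) ^ s₁) ∂dA := by
  classical
  obtain ⟨c, hc, hcr⟩ := q_lower_mean (fun z => g z ^ 2) (DifferentiableOn.fun_pow hg 2)
    (by obtain ⟨z, hz, h⟩ := hne; exact ⟨z, hz, pow_ne_zero 2 h⟩)
  refine ⟨c / 16 * 8 ^ (-s₁), by positivity, ?_⟩
  intro N
  set M : ℝ := (N:ℝ) + 1 with hM
  have hM1 : 1 ≤ M := by rw [hM]; have : (0:ℝ) ≤ N := Nat.cast_nonneg N; linarith
  have hM0 : 0 < M := by linarith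
  have hpi := Real.pi_pos
  set g' := (Metric.ball (0:ℂ) 1).piecewise g 0 with hg'
  have hgm : Measurable g' :=
    ContinuousOn.measurable_piecewise hg.continuousOn continuousOn_const measurableSet_ball
  have hgg : ∀ z ∈ Metric.ball (0:ℂ) 1, g' z = g z := fun z hz => by
    rw [hg', Set.piecewise_eq_of_mem _ _ _ hz]
  set F : ℂ → ENNReal := fun z => ENNReal.ofReal (M ^ (1 + s₂) * ‖z‖ ^ (2 * N) *
        ‖g' z‖ ^ 2 * (1 - ‖z‖ ^ 2) ^ s₁) with hF
  have hFm : Measurable F := by simp only [hF]; fun_prop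
  have e1 : ∫⁻ z in Metric.ball (0:ℂ) 1, ENNReal.ofReal (M ^ (1 + s₂) * ‖z‖ ^ (2 * N) *
        ‖g z‖ ^ 2 * (1 - ‖z‖ ^ 2) ^ s₁) ∂dA = ∫⁻ z in Metric.ball (0:ℂ) 1, F z ∂dA := by
    apply setLIntegral_congr_fun measurableSet_ball
    intro z hz
    simp only [hF, hgg z hz]
  rw [e1, q_polar F hFm]
  set J := Ioo (1 - 1 / (4 * M)) (1 - 1 / (8 * M)) with hJ
  have h4 : 1 / (4 * M) ≤ 1 / 4 := by
    apply one_div_le_one_div_of_le <;> linarith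
  have h8 : 0 < 1 / (8 * M) := by positivity
  have hJsub : J ⊆ Ioo (0:ℝ) 1 := by
    intro r hr
    exact ⟨by linarith [hr.1], by linarith [hr.2]⟩
  set K : ℝ := 1 / 2 * (M ^ (1 + s₂) * (1 / 2) * (1 / (8 * M)) ^ s₁ * (2 * π * c)) with hK
  have hK0 : 0 < K := by positivity
  have e2 : ENNReal.ofReal (c / 16 * 8 ^ (-s₁) * M ^ (s₂ - s₁)) =
      (ENNReal.ofReal π)⁻¹ * (∫⁻ r in J, ENNReal.ofReal K) := by
    rw [setLIntegral_const, hJ, Real.volume_Ioo, ← ENNReal.ofReal_mul hK0.le,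
      ← ENNReal.ofReal_inv_of_pos hpi, ← ENNReal.ofReal_mul (by positivity)]
    congr 1
    rw [hK, one_div (8 * M), Real.inv_rpow (by positivity), Real.mul_rpow (by norm_num) hM0.le,
      Real.rpow_neg (by norm_num), Real.rpow_add hM0, Real.rpow_sub hM0, Real.rpow_one]
    field_simp
    ring
  rw [e2]
  refine mul_le_mul' le_rfl (le_trans ?_ (lintegral_mono_set hJsub))
  apply setLIntegral_mono' measurableSet_Ioo
  intro r hr
  have hr01 := hJsub hr
  have hr34 : 3 / 4 ≤ r := by linarith [hr.1]
  have hn : ∀ θ : ℝ, ‖(r * Complex.exp (θ * I) : ℂ)‖ = r := by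
    intro θ
    simp [Complex.norm_exp_ofReal_mul_I, abs_of_pos hr01.1]
  have hb : ∀ θ : ℝ, (r * Complex.exp (θ * I) : ℂ) ∈ Metric.ball (0:ℂ) 1 := by
    intro θ
    rw [mem_ball_zero_iff, hn]; exact hr01.2
  have hr2 : 1 / (8 * M) ≤ 1 - r ^ 2 := by nlinarith [hr.1, hr.2]
  have hr2' : 0 ≤ 1 - r ^ 2 := h8.le.trans hr2
  have hr0 := hr01.1
  simp only [hF, hn]
  have e3 : ∀ θ : ℝ, ENNReal.ofReal (M ^ (1 + s₂) * r ^ (2 * N) *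
      ‖g' (r * Complex.exp (θ * I))‖ ^ 2 * (1 - r ^ 2) ^ s₁) =
      ENNReal.ofReal (M ^ (1 + s₂) * r ^ (2 * N) * (1 - r ^ 2) ^ s₁) *
      ENNReal.ofReal ((fun z => ‖g z ^ 2‖) (r * Complex.exp (θ * I))) := by
    intro θ
    rw [← ENNReal.ofReal_mul (by positivity)]
    congr 1
    simp only [hgg _ (hb θ), norm_pow]
    ring
  simp only [e3]
  rw [lintegral_const_mul' _ _ (by simp), q_circle (fun z => ‖g z ^ 2‖) r hr0.le,
    ← ENNReal.ofReal_mul (by positivity), ← ENNReal.ofReal_mul (by positivity)]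
  · apply ENNReal.ofReal_le_ofReal
    rw [hK]
    have hpow : 1 / 2 ≤ r ^ (2 * N) := by
      have hb1 := one_add_mul_le_pow (a := r - 1) (by linarith) (2 * N)
      have : 1 + (r - 1) = r := by ring
      rw [this] at hb1
      refine le_trans ?_ hb1
      push_cast
      have hh : 1 - r ≤ 1 / (4 * M) := by linarith [hr.1]
      have hN : (N:ℝ) ≤ M := by linarith
      have : 2 * (N:ℝ) * (1 - r) ≤ 2 * M * (1 / (4 * M)) := by
        gcongr
        linarith [hr01.2]
      have h3 : 2 * M * (1 / (4 * M)) = 1 / 2 := by field_simp; norm_num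
      linarith
    have hav := hcr r (by linarith) hr01.2
    have hav0 := hc.le.trans hav
    gcongr
    linarith
  · apply ContinuousOn.norm
    apply (hg.continuousOn.pow 2).mono
    intro z hz
    have : ‖z‖ = r := by simpa using hz
    rw [mem_ball_zero_iff, this]; exact hr01.2
  · intro z _
    positivity

lemma q_Ig (h : ℂ → ℂ) (hh : HolOn h) (z : ℂ) (hz : z ∈ Metric.ball (0:ℂ) 1) :
    HasDerivAt (fun w : ℂ => w * ∫ t in (0:ℝ)..1, h ((t : ℂ) * w)) (h z) z := by
  obtain ⟨F, hF⟩ := hh.isExactOn_ball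
  have heq : ∀ w ∈ Metric.ball (0:ℂ) 1, w * ∫ t in (0:ℝ)..1, h ((t : ℂ) * w) = F w - F 0 := by
    intro w hw
    have hmem : ∀ t ∈ uIcc (0:ℝ) 1, (t : ℂ) * w ∈ Metric.ball (0:ℂ) 1 := by
      intro t ht
      rw [uIcc_of_le zero_le_one] at ht
      rw [mem_ball_zero_iff] at hw ⊢
      rw [norm_mul, Complex.norm_real, Real.norm_eq_abs, abs_of_nonneg ht.1]
      nlinarith [norm_nonneg w, ht.1, ht.2]
    have h1 : ∫ t in (0:ℝ)..1, w * h ((t : ℂ) * w) = F (((1:ℝ):ℂ) * w) - F (((0:ℝ):ℂ) * w) := by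
      apply intervalIntegral.integral_eq_sub_of_hasDerivAt (f := fun t : ℝ => F ((t:ℂ) * w))
      · intro t ht
        have h2 := hF _ (hmem t ht)
        have h3 : HasDerivAt (fun t : ℝ => (t:ℂ) * w) w t := by
          simpa using (Complex.ofRealCLM.hasDerivAt (x := t)).mul_const w
        have := h2.comp t h3
        rw [mul_comm] at this
        exact this
      · apply ContinuousOn.intervalIntegrable
        apply continuousOn_const.mul
        apply hh.continuousOn.comp (by fun_prop) hmem
    rw [← intervalIntegral.integral_const_mul, h1]
    simp
  have hd : HasDerivAt (fun w => F w - F 0) (h z) z := (hF z hz).sub_const _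
  apply hd.congr_of_eventuallyEq
  filter_upwards [isOpen_ball.mem_nhds hz] with w hw using heq w hw

noncomputable def qc (s : ℝ) (n : ℕ) : ℝ := ((n:ℝ) + 1) ^ ((s - 1) / 2)

noncomputable def qf (s : ℝ) (x : ℕ → ℂ) (z : ℂ) : ℂ := ∑' n, x n * qc s n * z ^ (n + 1)

noncomputable def qb (s : ℝ) (n : ℕ) (z : ℂ) : ℂ := qc s n * ((n:ℂ) + 1) * z ^ n

lemma qc_pos (s : ℝ) (n : ℕ) : 0 < qc s n := by
  unfold qc; positivity

lemma qc_le (s : ℝ) (hs : s ≤ 1) (n : ℕ) : qc s n ≤ 1 := by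
  unfold qc
  apply Real.rpow_le_one_of_one_le_of_nonpos
  · have : (0:ℝ) ≤ n := Nat.cast_nonneg n
    linarith
  · linarith

lemma qb_norm (s : ℝ) (n : ℕ) (z : ℂ) : ‖qb s n z‖ = qc s n * ((n:ℝ) + 1) * ‖z‖ ^ n := by
  unfold qb
  rw [norm_mul, norm_mul, norm_pow, Complex.norm_real, Real.norm_eq_abs, abs_of_pos (qc_pos s n)]
  congr 2
  have : ((n:ℂ) + 1) = ((n + 1 : ℕ) : ℂ) := by push_cast; rfl
  rw [this, Complex.norm_natCast]
  push_cast; rfl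

lemma qb_norm_sq (s : ℝ) (n : ℕ) (z : ℂ) :
    ‖qb s n z‖ ^ 2 = ((n:ℝ) + 1) ^ (1 + s) * ‖z‖ ^ (2 * n) := by
  rw [qb_norm, mul_pow, mul_pow]
  have h0 : (0:ℝ) < (n:ℝ) + 1 := by positivity
  have : qc s n ^ 2 * ((n:ℝ) + 1) ^ 2 = ((n:ℝ) + 1) ^ (1 + s) := by
    unfold qc
    rw [← Real.rpow_natCast, ← Real.rpow_mul h0.le, ← Real.rpow_natCast, ← Real.rpow_add h0]
    congr 1
    push_cast
    ring
  rw [this]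
  ring

lemma qb_bound (s : ℝ) (hs : s ≤ 1) (n : ℕ) (z : ℂ) (hz : ‖z‖ < 1) :
    ‖qb s n z‖ ≤ 1 / (1 - ‖z‖) := by
  rw [qb_norm]
  have h1 : ((n:ℝ) + 1) * ‖z‖ ^ n ≤ ∑ k ∈ Finset.range (n + 1), ‖z‖ ^ k := by
    have : ∑ k ∈ Finset.range (n + 1), ‖z‖ ^ n ≤ ∑ k ∈ Finset.range (n + 1), ‖z‖ ^ k := by
      apply Finset.sum_le_sum
      intro k hk
      apply pow_le_pow_of_le_one (norm_nonneg _) hz.le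
      have := Finset.mem_range.mp hk
      omega
    simpa using this
  have h2 : ∑ k ∈ Finset.range (n + 1), ‖z‖ ^ k ≤ 1 / (1 - ‖z‖) := by
    rw [le_div_iff₀ (by linarith), geom_sum_mul_neg]
    have := pow_nonneg (norm_nonneg z) (n + 1)
    linarith
  have h3 := qc_le s hs n
  have h4 := (qc_pos s n).le
  have h5 : 0 ≤ ((n:ℝ) + 1) * ‖z‖ ^ n := by positivity
  nlinarith

lemma qf_term (s : ℝ) (hs : s ≤ 1) (x : ℕ → ℂ) (n : ℕ) (z : ℂ) (hz : z ∈ Metric.ball (0:ℂ) 1) :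
    ‖x n * qc s n * z ^ (n + 1)‖ ≤ ‖x n‖ := by
  rw [norm_mul, norm_mul, norm_pow, Complex.norm_real, Real.norm_eq_abs, abs_of_pos (qc_pos s n)]
  have hz1 : ‖z‖ < 1 := by simpa using hz
  have h1 := pow_le_one₀ (n := n + 1) (norm_nonneg z) hz1.le
  have h2 := pow_nonneg (norm_nonneg z) (n + 1)
  have h3 := qc_le s hs n
  have h4 := (qc_pos s n).le
  calc ‖x n‖ * qc s n * ‖z‖ ^ (n + 1) ≤ ‖x n‖ * 1 * 1 := by gcongr
    _ = _ := by ring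

lemma qf_hol (s : ℝ) (hs : s ≤ 1) (x : ℕ → ℂ) (hx : Summable fun n => ‖x n‖) :
    HolOn (qf s x) := by
  apply differentiableOn_tsum_of_summable_norm hx
  · intro n; fun_prop
  · exact isOpen_ball
  · intro n z hz; exact qf_term s hs x n z hz

lemma qf_bdd (s : ℝ) (hs : s ≤ 1) (x : ℕ → ℂ) (hx : Summable fun n => ‖x n‖) (z : ℂ)
    (hz : z ∈ Metric.ball (0:ℂ) 1) : ‖qf s x z‖ ≤ ∑' n, ‖x n‖ :=
  tsum_of_norm_bounded hx.hasSum fun n => qf_term s hs x n z hz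

lemma qf_deriv (s : ℝ) (hs : s ≤ 1) (x : ℕ → ℂ) (hx : Summable fun n => ‖x n‖) (z : ℂ)
    (hz : z ∈ Metric.ball (0:ℂ) 1) : HasSum (fun n => x n * qb s n z) (deriv (qf s x) z) := by
  have := hasSum_deriv_of_summable_norm (F := fun n z => x n * qc s n * z ^ (n + 1)) hx
    (fun n => by fun_prop) isOpen_ball (fun n z hz => qf_term s hs x n z hz) hz
  convert! this using 1
  ext n
  rw [deriv_const_mul _ (by fun_prop)]
  simp [qb]
  ring

lemma q_cs (u β : ℕ → ℝ) (hu : ∀ n, 0 ≤ u n) (hs : Summable u) (h1 : Summable fun n => u n * β n)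
    (h2 : Summable fun n => u n * β n ^ 2) :
    (∑' n, u n * β n) ^ 2 ≤ (∑' n, u n) * ∑' n, u n * β n ^ 2 := by
  have key : ∀ t : ℝ, 0 ≤ (∑' n, u n) * (t * t) + (-2 * ∑' n, u n * β n) * t +
      ∑' n, u n * β n ^ 2 := by
    intro t
    have : (∑' n, u n) * (t * t) + (-2 * ∑' n, u n * β n) * t + ∑' n, u n * β n ^ 2
        = ∑' n, u n * (t - β n) ^ 2 := by
      rw [← tsum_mul_right, ← tsum_mul_left, ← tsum_mul_right,
        ← (hs.mul_right _).tsum_add ((h1.mul_left _).mul_right _),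
        ← ((hs.mul_right _).add ((h1.mul_left _).mul_right _)).tsum_add h2]
      congr 1
      ext n
      ring
    rw [this]
    exact tsum_nonneg fun n => mul_nonneg (hu n) (sq_nonneg _)
  have := discrim_le_zero key
  rw [discrim] at this
  linarith

lemma qf_deriv_sq (s : ℝ) (hs : s ≤ 1) (x : ℕ → ℂ) (hx : Summable fun n => ‖x n‖) (z : ℂ)
    (hz : z ∈ Metric.ball (0:ℂ) 1) :
    (Summable fun n => ‖x n‖ * ‖qb s n z‖ ^ 2) ∧
    ‖deriv (qf s x) z‖ ^ 2 ≤ (∑' n, ‖x n‖) * ∑' n, ‖x n‖ * ‖qb s n z‖ ^ 2 := by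
  have hz1 : ‖z‖ < 1 := by simpa using hz
  have h1 : Summable fun n => ‖x n‖ * ‖qb s n z‖ := by
    apply Summable.of_nonneg_of_le (fun n => by positivity) _ (hx.mul_right (1 / (1 - ‖z‖)))
    intro n
    gcongr
    exact qb_bound s hs n z hz1
  have h2 : Summable fun n => ‖x n‖ * ‖qb s n z‖ ^ 2 := by
    apply Summable.of_nonneg_of_le (fun n => by positivity) _ (hx.mul_right ((1 / (1 - ‖z‖)) ^ 2))
    intro n
    gcongr
    exact qb_bound s hs n z hz1
  refine ⟨h2, ?_⟩
  refine le_trans ?_ (q_cs _ _ (fun n => norm_nonneg _) hx h1 h2)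
  gcongr
  rw [← (qf_deriv s hs x hx z hz).tsum_eq]
  exact tsum_of_norm_bounded h1.hasSum fun n => (norm_mul _ _).le

lemma qf_mem (s : ℝ) (hs0 : 0 < s) (hs : s ≤ 1) (x : ℕ → ℂ) (hx : Summable fun n => ‖x n‖) :
    qf s x ∈ Qs s := by
  refine ⟨qf_hol s hs x hx, ?_⟩
  set S := ∑' n, ‖x n‖ with hS
  have hS0 : 0 ≤ S := tsum_nonneg fun n => norm_nonneg _
  refine lt_of_le_of_lt (b := ENNReal.ofReal S * (ENNReal.ofReal S * 2)) ?_
    (by simp [ENNReal.mul_lt_top_iff])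
  refine iSup₂_le fun a ha => ?_
  have ha1 : ‖a‖ < 1 := by simpa using ha
  have hpm : Measurable fun z => phi a z := by unfold phi; fun_prop
  calc _ ≤ ∫⁻ z in Metric.ball (0:ℂ) 1, ENNReal.ofReal S * ∑' n, ENNReal.ofReal ‖x n‖ *
        ENNReal.ofReal (((n:ℝ) + 1) ^ (1 + s) * ‖z‖ ^ (2 * n) *
          (1 - ‖phi a z‖ ^ 2) ^ s) ∂dA := by
        apply setLIntegral_mono' measurableSet_ball
        intro z hz
        have hz1 : ‖z‖ < 1 := by simpa using hz
        obtain ⟨h1, h2⟩ := qf_deriv_sq s hs x hx z hz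
        have hphi : 0 ≤ 1 - ‖phi a z‖ ^ 2 := by
          rw [q_phi_identity a z ha1 hz1]
          have : 0 ≤ 1 - ‖a‖ ^ 2 := by nlinarith [norm_nonneg a]
          have : 0 ≤ 1 - ‖z‖ ^ 2 := by nlinarith [norm_nonneg z]
          positivity
        set w := (1 - ‖phi a z‖ ^ 2) ^ s with hw
        have hw0 : 0 ≤ w := by positivity
        have e : ∀ n, ENNReal.ofReal ‖x n‖ *
            ENNReal.ofReal (((n:ℝ) + 1) ^ (1 + s) * ‖z‖ ^ (2 * n) * w) =
            ENNReal.ofReal (‖x n‖ * ‖qb s n z‖ ^ 2 * w) := by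
          intro n
          rw [← ENNReal.ofReal_mul (norm_nonneg _), ← qb_norm_sq, mul_assoc]
        simp only [e]
        rw [← ENNReal.ofReal_tsum_of_nonneg (fun n => by positivity) (h1.mul_right w),
          ← ENNReal.ofReal_mul hS0, tsum_mul_right]
        apply ENNReal.ofReal_le_ofReal
        rw [← mul_assoc]
        gcongr
    _ = ENNReal.ofReal S * ∑' n, ENNReal.ofReal ‖x n‖ * ∫⁻ z in Metric.ball (0:ℂ) 1,
        ENNReal.ofReal (((n:ℝ) + 1) ^ (1 + s) * ‖z‖ ^ (2 * n) *
          (1 - ‖phi a z‖ ^ 2) ^ s) ∂dA := by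
        rw [lintegral_const_mul' _ _ (by simp), lintegral_tsum]
        · congr 2
          ext n
          rw [lintegral_const_mul' _ _ (by simp)]
        · intro n
          apply Measurable.aemeasurable
          fun_prop
    _ ≤ ENNReal.ofReal S * ∑' n, ENNReal.ofReal ‖x n‖ * 2 := by
        gcongr with n
        exact q_mono s hs0 hs a ha1 n
    _ = _ := by
        rw [ENNReal.tsum_mul_right, ← ENNReal.ofReal_tsum_of_nonneg (fun n => norm_nonneg _) hx]

lemma q_at_zero (s : ℝ) (f : ℂ → ℂ) (hf : f ∈ Qs s) :
    ∫⁻ z in Metric.ball (0:ℂ) 1, ENNReal.ofReal (‖deriv f z‖ ^ 2 * (1 - ‖z‖ ^ 2) ^ s) ∂dA < ⊤ := by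
  refine lt_of_le_of_lt ?_ hf.2
  refine le_trans (le_of_eq ?_) (le_iSup₂ (0:ℂ) (mem_ball_self one_pos))
  simp [phi]

lemma q_lint (ν : Measure ℂ) (u : ℂ → ℂ) :
    ∫⁻ z, ENNReal.ofReal (‖u z‖ ^ 2) ∂ν = eLpNorm u 2 ν ^ 2 := by
  rw [eLpNorm_eq_lintegral_rpow_enorm_toReal (by norm_num) (by norm_num)]
  rw [← ENNReal.rpow_natCast, ← ENNReal.rpow_mul]
  simp [ENNReal.ofReal_pow]

lemma q_lp_summable (x : lp (fun _ : ℕ => ℂ) 1) : Summable fun n => ‖x n‖ := by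
  have := (lp.memℓp x).summable (by simp)
  simpa using this

lemma q_lp_norm (x : lp (fun _ : ℕ => ℂ) 1) : ∑' n, ‖x n‖ = ‖x‖ := by
  rw [lp.norm_eq_tsum_rpow (by simp)]
  simp

lemma qf_deriv_le (s : ℝ) (hs : s ≤ 1) (x : ℕ → ℂ) (hx : Summable fun n => ‖x n‖) (z : ℂ)
    (hz : z ∈ Metric.ball (0:ℂ) 1) :
    ‖deriv (qf s x) z‖ ≤ (∑' n, ‖x n‖) * (1 / (1 - ‖z‖)) := by
  have hz1 : ‖z‖ < 1 := by simpa using hz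
  rw [← (qf_deriv s hs x hx z hz).tsum_eq, ← tsum_mul_right]
  apply tsum_of_norm_bounded (hx.mul_right _).hasSum
  intro n
  rw [norm_mul]
  gcongr
  exact qb_bound s hs n z hz1

theorem q_key (s₁ s₂ : ℝ) (hs0 : 0 < s₁) (hs12 : s₁ < s₂) (hs2 : s₂ ≤ 1)
    (g : ℂ → ℂ) (hg : HolOn g)
    (H : ∀ f ∈ Qs s₂, (∃ C : ℝ, ∀ z ∈ Metric.ball (0:ℂ) 1, ‖f z‖ ≤ C) →
      ∫⁻ z in Metric.ball (0:ℂ) 1,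
        ENNReal.ofReal (‖g z * deriv f z‖ ^ 2 * (1 - ‖z‖ ^ 2) ^ s₁) ∂dA < ⊤) :
    ∀ z ∈ Metric.ball (0:ℂ) 1, g z = 0 := by
  by_contra! hne
  obtain ⟨c, hc, hlow⟩ := q_lower s₁ s₂ hs0 g hg hne
  set ν : Measure ℂ := dA.restrict (Metric.ball (0:ℂ) 1) with hν
  set w : ℂ → ℝ := fun z => (1 - ‖z‖ ^ 2) ^ (s₁ / 2) with hw
  have hwc : Continuous w :=
    (Real.continuous_rpow_const (by linarith)).comp (by fun_prop)
  have hw2 : ∀ z ∈ Metric.ball (0:ℂ) 1, w z ^ 2 = (1 - ‖z‖ ^ 2) ^ s₁ := by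
    intro z hz
    have hz1 : ‖z‖ < 1 := by simpa using hz
    have hz2 : 0 ≤ 1 - ‖z‖ ^ 2 := by nlinarith [norm_nonneg z]
    simp only [hw]
    rw [← Real.rpow_natCast, ← Real.rpow_mul hz2]
    congr 1
    push_cast; ring
  set U : lp (fun _ : ℕ => ℂ) 1 → ℂ → ℂ :=
    fun x z => (w z : ℂ) * (g z * deriv (qf s₂ x) z) with hU
  have hUn : ∀ x, ∀ z ∈ Metric.ball (0:ℂ) 1, ‖U x z‖ ^ 2 =
      ‖g z * deriv (qf s₂ x) z‖ ^ 2 * (1 - ‖z‖ ^ 2) ^ s₁ := by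
    intro x z hz
    simp only [hU]
    rw [norm_mul, mul_pow, Complex.norm_real, Real.norm_eq_abs, sq_abs, hw2 z hz, mul_comm]
  have hUint : ∀ x, eLpNorm (U x) 2 ν ^ 2 = ∫⁻ z in Metric.ball (0:ℂ) 1,
        ENNReal.ofReal (‖g z * deriv (qf s₂ x) z‖ ^ 2 * (1 - ‖z‖ ^ 2) ^ s₁) ∂dA := by
    intro x
    rw [← q_lint]
    apply setLIntegral_congr_fun measurableSet_ball
    intro z hz
    simp only [hUn x z hz]
  have hmem : ∀ x, MemLp (U x) 2 ν := by
    intro x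
    refine ⟨?_, ?_⟩
    · apply ContinuousOn.aestronglyMeasurable _ measurableSet_ball
      apply ContinuousOn.mul
      · exact (Complex.continuous_ofReal.comp hwc).continuousOn
      · apply hg.continuousOn.mul
        exact ((qf_hol s₂ hs2 x (q_lp_summable x)).deriv isOpen_ball).continuousOn
    · have h1 := H (qf s₂ x) (qf_mem s₂ (by linarith) hs2 x (q_lp_summable x))
        ⟨_, fun z hz => qf_bdd s₂ hs2 x (q_lp_summable x) z hz⟩
      rw [← hUint x] at h1
      by_contra hcon
      rw [not_lt, top_le_iff] at hcon
      rw [hcon] at h1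
      simp at h1
  have hadd : ∀ x y, ∀ z ∈ Metric.ball (0:ℂ) 1,
      deriv (qf s₂ (x + y : lp (fun _ : ℕ => ℂ) 1)) z =
        deriv (qf s₂ x) z + deriv (qf s₂ y) z := by
    intro x y z hz
    refine (qf_deriv s₂ hs2 _ (q_lp_summable (x + y)) z hz).unique ?_
    convert! (qf_deriv s₂ hs2 _ (q_lp_summable x) z hz).add
      (qf_deriv s₂ hs2 _ (q_lp_summable y) z hz) using 1
    ext n
    simp [add_mul]
  have hsmul : ∀ (k : ℂ) (x : lp (fun _ : ℕ => ℂ) 1), ∀ z ∈ Metric.ball (0:ℂ) 1,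
      deriv (qf s₂ (k • x : lp (fun _ : ℕ => ℂ) 1)) z = k * deriv (qf s₂ x) z := by
    intro k x z hz
    refine (qf_deriv s₂ hs2 _ (q_lp_summable (k • x)) z hz).unique ?_
    convert! (qf_deriv s₂ hs2 _ (q_lp_summable x) z hz).mul_left k using 1
    ext n
    simp [mul_assoc]
  let T : lp (fun _ : ℕ => ℂ) 1 →ₗ[ℂ] Lp ℂ 2 ν :=
    { toFun := fun x => (hmem x).toLp (U x)
      map_add' := by
        intro x y
        rw [← MemLp.toLp_add, MemLp.toLp_eq_toLp_iff]
        apply ae_restrict_of_forall_mem measurableSet_ball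
        intro z hz
        simp only [hU, Pi.add_apply, hadd x y z hz]
        ring
      map_smul' := by
        intro k x
        simp only [RingHom.id_apply]
        rw [← MemLp.toLp_const_smul, MemLp.toLp_eq_toLp_iff]
        apply ae_restrict_of_forall_mem measurableSet_ball
        intro z hz
        simp only [hU, Pi.smul_apply, smul_eq_mul, hsmul k x z hz]
        ring }
  have hTcoe : ∀ x, ∀ᵐ z ∂ν, T x z = U x z := fun x => (hmem x).coeFn_toLp
  have hTc : Continuous T := by
    apply LinearMap.continuous_of_seq_closed_graph
    intro u x y hux huy
    obtain ⟨ns, hns, hae⟩ := (tendstoInMeasure_of_tendsto_Lp huy).exists_seq_tendsto_ae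
    apply Lp.ext
    have hall : ∀ᵐ z ∂ν, ∀ n, T (u n) z = U (u n) z := ae_all_iff.mpr fun n => hTcoe (u n)
    filter_upwards [hae, hall, hTcoe x, ae_restrict_mem measurableSet_ball] with z h1 h2 h3 hz
    rw [h3]
    refine tendsto_nhds_unique h1 ?_
    simp only [Function.comp_apply, h2]
    simp only [hU]
    apply Tendsto.const_mul
    apply Tendsto.const_mul
    have hz1 : ‖z‖ < 1 := by simpa using hz
    rw [tendsto_iff_norm_sub_tendsto_zero]
    have hux' : Tendsto (fun i => ‖u (ns i) - x‖ * (1 / (1 - ‖z‖))) atTop (nhds 0) := by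
      have h4 := (tendsto_iff_norm_sub_tendsto_zero.mp (hux.comp hns.tendsto_atTop)).mul_const
        (1 / (1 - ‖z‖))
      simpa using h4
    refine squeeze_zero (fun i => norm_nonneg _) (fun i => ?_) hux'
    have h5 := hadd (u (ns i) - x) x z hz
    rw [sub_add_cancel] at h5
    rw [h5, add_sub_cancel_right, ← q_lp_norm]
    exact qf_deriv_le s₂ hs2 _ (q_lp_summable _) z hz
  let T' : lp (fun _ : ℕ => ℂ) 1 →L[ℂ] Lp ℂ 2 ν := ⟨T, hTc⟩
  have hbound : ∀ N : ℕ, c * ((N:ℝ) + 1) ^ (s₂ - s₁) ≤ ‖T'‖ ^ 2 := by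
    intro N
    set e : lp (fun _ : ℕ => ℂ) 1 := lp.single 1 N (1:ℂ) with he
    have hde : ∀ z ∈ Metric.ball (0:ℂ) 1, deriv (qf s₂ e) z = qb s₂ N z := by
      intro z hz
      refine (qf_deriv s₂ hs2 _ (q_lp_summable e) z hz).unique ?_
      have h1 := hasSum_single (f := fun n => e n * qb s₂ n z) N (by
        intro n hn
        rw [he, lp.single_apply_ne _ _ _ hn, zero_mul])
      rw [he, lp.single_apply_self, one_mul] at h1
      exact h1
    have h1 : ‖T' e‖ ≤ ‖T'‖ := by
      have := T'.le_opNorm e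
      rwa [he, lp.norm_single (by norm_num), norm_one, mul_one] at this
    have h2 : ‖T' e‖ = (eLpNorm (U e) 2 ν).toReal := Lp.norm_toLp _ (hmem e)
    have h3 : eLpNorm (U e) 2 ν = ENNReal.ofReal ‖T' e‖ := by
      rw [h2, ENNReal.ofReal_toReal (hmem e).2.ne]
    have h4 := hUint e
    have h5 : ∫⁻ z in Metric.ball (0:ℂ) 1,
        ENNReal.ofReal (‖g z * deriv (qf s₂ e) z‖ ^ 2 * (1 - ‖z‖ ^ 2) ^ s₁) ∂dA =
        ∫⁻ z in Metric.ball (0:ℂ) 1, ENNReal.ofReal (((N:ℝ) + 1) ^ (1 + s₂) * ‖z‖ ^ (2 * N) *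
        ‖g z‖ ^ 2 * (1 - ‖z‖ ^ 2) ^ s₁) ∂dA := by
      apply setLIntegral_congr_fun measurableSet_ball
      intro z hz
      simp only [hde z hz]
      rw [norm_mul, mul_pow, qb_norm_sq, mul_comm (‖g z‖ ^ 2)]
    have h6 := hlow N
    rw [← h5, ← h4, h3, ← ENNReal.ofReal_pow (norm_nonneg _)] at h6
    have h7 := (ENNReal.ofReal_le_ofReal_iff (by positivity)).mp h6
    refine h7.trans ?_
    gcongr
  have htend : Tendsto (fun N : ℕ => c * ((N:ℝ) + 1) ^ (s₂ - s₁)) atTop atTop := by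
    apply Tendsto.const_mul_atTop hc
    apply (tendsto_rpow_atTop (by linarith)).comp
    exact tendsto_atTop_add_const_right _ _ tendsto_natCast_atTop_atTop
  obtain ⟨N, hN⟩ := (htend.eventually_gt_atTop (‖T'‖ ^ 2)).exists
  exact absurd (hbound N) (not_le.mpr hN)

lemma q_zero_mem (s : ℝ) (f : ℂ → ℂ) (k : ℂ) (hf : ∀ z ∈ Metric.ball (0:ℂ) 1, f z = k) :
    f ∈ Qs s := by
  have hd : ∀ z ∈ Metric.ball (0:ℂ) 1, HasDerivAt f 0 z := by
    intro z hz
    apply (hasDerivAt_const z k).congr_of_eventuallyEq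
    filter_upwards [isOpen_ball.mem_nhds hz] with w hw using hf w hw
  refine ⟨fun z hz => (hd z hz).differentiableAt.differentiableWithinAt, ?_⟩
  refine lt_of_le_of_lt (b := 0) ?_ (by simp)
  refine iSup₂_le fun a ha => ?_
  rw [← lintegral_zero (μ := dA.restrict (Metric.ball (0:ℂ) 1))]
  apply setLIntegral_mono' measurableSet_ball
  intro z hz
  simp [(hd z hz).deriv]

/-- For `0 < s₁ < s₂ ≤ 1` and `g` holomorphic on the unit disc, the
following are equivalent: (i) `I_g` maps `Q_{s₂}` into `Q_{s₁}`; (ii) `M_g` maps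
`Q_{s₂}` into `Q_{s₁}`; (iii) `g ≡ 0` (on the disc). -/
theorem stmt16 (s₁ s₂ : ℝ) (hs0 : 0 < s₁) (hs12 : s₁ < s₂) (hs2 : s₂ ≤ 1)
    (g : ℂ → ℂ) (hg : HolOn g) :
    (MapsInto (Ig g) (Qs s₂) (Qs s₁) ↔ ∀ z ∈ Metric.ball (0:ℂ) 1, g z = 0) ∧
    (MapsInto (Mg g) (Qs s₂) (Qs s₁) ↔ ∀ z ∈ Metric.ball (0:ℂ) 1, g z = 0) := by
  refine ⟨⟨fun hI => ?_, fun h0 => ?_⟩, ⟨fun hM => ?_, fun h0 => ?_⟩⟩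
  · apply q_key s₁ s₂ hs0 hs12 hs2 g hg
    intro f hf _
    have h1 := q_at_zero s₁ _ (hI f hf)
    have hh : HolOn fun z => g z * deriv f z :=
      DifferentiableOn.mul hg (DifferentiableOn.deriv hf.1 isOpen_ball)
    convert! h1 using 1
    apply setLIntegral_congr_fun measurableSet_ball
    intro z hz
    have h2 : deriv (Ig g f) z = g z * deriv f z := (q_Ig _ hh z hz).deriv
    simp only [h2]
  · intro f _
    apply q_zero_mem s₁ _ 0
    intro z hz
    unfold Ig
    have : ∫ t in (0:ℝ)..1, g ((t : ℂ) * z) * deriv f ((t : ℂ) * z) = ∫ t in (0:ℝ)..1, (0:ℂ) := by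
      apply intervalIntegral.integral_congr
      intro t ht
      rw [uIcc_of_le zero_le_one] at ht
      have hm : (t : ℂ) * z ∈ Metric.ball (0:ℂ) 1 := by
        rw [mem_ball_zero_iff] at hz ⊢
        rw [norm_mul, Complex.norm_real, Real.norm_eq_abs, abs_of_nonneg ht.1]
        nlinarith [norm_nonneg z, ht.1, ht.2]
      simp only [h0 _ hm, zero_mul]
    rw [this]
    simp
  · apply q_key s₁ s₂ hs0 hs12 hs2 g hg
    rintro f hf ⟨C, hC⟩
    have h1 := q_at_zero s₁ _ (hM f hf)
    have hg1 : g ∈ Qs s₁ := by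
      have := hM (fun _ => 1) (q_zero_mem s₂ _ 1 fun _ _ => rfl)
      have e : Mg g (fun _ => 1) = g := by ext z; simp [Mg]
      rwa [e] at this
    have h2 := q_at_zero s₁ _ hg1
    have hmeas : AEMeasurable (fun z => ENNReal.ofReal (2 * C ^ 2) *
        ENNReal.ofReal (‖deriv g z‖ ^ 2 * (1 - ‖z‖ ^ 2) ^ s₁))
        (dA.restrict (Metric.ball (0:ℂ) 1)) := by
      have hgd : AEMeasurable (deriv g) (dA.restrict (Metric.ball (0:ℂ) 1)) :=
        (measurable_deriv g).aemeasurable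
      fun_prop
    refine lt_of_le_of_lt (b := ∫⁻ z in Metric.ball (0:ℂ) 1, (ENNReal.ofReal (2 * C ^ 2) *
        ENNReal.ofReal (‖deriv g z‖ ^ 2 * (1 - ‖z‖ ^ 2) ^ s₁) +
        ENNReal.ofReal 2 * ENNReal.ofReal (‖deriv (Mg g f) z‖ ^ 2 * (1 - ‖z‖ ^ 2) ^ s₁)) ∂dA) ?_ ?_
    · apply setLIntegral_mono' measurableSet_ball
      intro z hz
      have hz1 : ‖z‖ < 1 := by simpa using hz
      have hz2 : 0 ≤ 1 - ‖z‖ ^ 2 := by nlinarith [norm_nonneg z]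
      have hgz : DifferentiableAt ℂ g z := hg.differentiableAt (isOpen_ball.mem_nhds hz)
      have hfz : DifferentiableAt ℂ f z := hf.1.differentiableAt (isOpen_ball.mem_nhds hz)
      have hd : deriv (Mg g f) z = deriv g z * f z + g z * deriv f z :=
        (hgz.hasDerivAt.mul hfz.hasDerivAt).deriv
      rw [← ENNReal.ofReal_mul (by positivity), ← ENNReal.ofReal_mul (by positivity),
        ← ENNReal.ofReal_add (by positivity) (by positivity)]
      apply ENNReal.ofReal_le_ofReal
      have e1 : g z * deriv f z = deriv (Mg g f) z - deriv g z * f z := by rw [hd]; ring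
      have e2 : ‖g z * deriv f z‖ ≤ ‖deriv (Mg g f) z‖ + ‖deriv g z‖ * C := by
        rw [e1]
        refine (norm_sub_le _ _).trans ?_
        rw [norm_mul]
        gcongr
        exact hC z hz
      have e3 : ‖g z * deriv f z‖ ^ 2 ≤
          2 * C ^ 2 * ‖deriv g z‖ ^ 2 + 2 * ‖deriv (Mg g f) z‖ ^ 2 := by
        have : ‖g z * deriv f z‖ ^ 2 ≤ (‖deriv (Mg g f) z‖ + ‖deriv g z‖ * C) ^ 2 := by gcongr
        nlinarith [sq_nonneg (‖deriv (Mg g f) z‖ - ‖deriv g z‖ * C)]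
      have hw0 : 0 ≤ (1 - ‖z‖ ^ 2) ^ s₁ := by positivity
      calc _ ≤ (2 * C ^ 2 * ‖deriv g z‖ ^ 2 + 2 * ‖deriv (Mg g f) z‖ ^ 2) *
            (1 - ‖z‖ ^ 2) ^ s₁ := by gcongr
        _ = _ := by ring
    · rw [lintegral_add_left' hmeas, lintegral_const_mul' _ _ ENNReal.ofReal_ne_top,
        lintegral_const_mul' _ _ ENNReal.ofReal_ne_top]
      exact ENNReal.add_lt_top.mpr ⟨ENNReal.mul_lt_top ENNReal.ofReal_lt_top h2, ENNReal.mul_lt_top ENNReal.ofReal_lt_top h1⟩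
  · intro f _
    apply q_zero_mem s₁ _ 0
    intro z hz
    simp [Mg, h0 z hz]
end
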